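/- Let 1 ≤ p ≤ ∞ with Hölder conjugate p*, and let σ_j = j^{−λ} for j ∈ ℕ with λ > (1/2 − 1/p)₊ := max{1/2 − 1/p, 0}. Define decay(rad(E^m_{p,σ}, n)) := sup{ρ ≥ 0 : ∃ C ∈ (0,∞) with rad(E^m_{p,σ}, n) ≤ C·n^{−ρ} for all m ∈ ℕ and 1 ≤ n < m}, where rad(E^m_{p,σ}, n) := inf_{E_n} rad(E^m_{p,σ}, E_n), the infimum over all linear subspaces E_n ⊆ ℝ^m of codimension n. Then decay(rad(E^m_{p,σ}, n)) = λ·p*/2 if 1 ≤ p < 2 and λ < 1/p*, and decay(rad(E^m_{p,σ}, n)) = λ + 1/p − 1/2 otherwise. -/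

import Mathlib

open scoped ENNReal NNReal

attribute [local instance] Classical.propDecidable

/-- The `ℓ_p`-(quasi-)norm on `ℝ^m`, for `0 < p ≤ ∞`. -/
noncomputable def lpnorm (p : ℝ≥0∞) {m : ℕ} (x : Fin m → ℝ) : ℝ :=
  if p = ∞ then ⨆ j, |x j| else (∑ j, |x j| ^ p.toReal) ^ (1 / p.toReal)

/-- The `ℓ_p`-ellipsoid with semiaxes `σ`. -/
noncomputable def ellipsoid (p : ℝ≥0∞) {m : ℕ} (σ : Fin m → ℝ) : Set (Fin m → ℝ) :=
  {x | lpnorm p (fun j => x j / σ j) ≤ 1}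

/-- `rad_q(K, E)`: the supremum of the `ℓ_q`-norm over `K ∩ E`. -/
noncomputable def radq (q : ℝ≥0∞) {m : ℕ} (K E : Set (Fin m → ℝ)) : ℝ :=
  sSup (lpnorm q '' (K ∩ E))

/-- The minimal radius `rad(E^m_{p,σ}, n)`: the infimum of the circumradius of sections of
the `ℓ_p`-ellipsoid over all linear subspaces of `ℝ^m` of codimension `n`. -/
noncomputable def minrad (p : ℝ≥0∞) {m : ℕ} (σ : Fin m → ℝ) (n : ℕ) : ℝ :=
  sInf { t | ∃ E : Submodule ℝ (Fin m → ℝ),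
      Module.finrank ℝ ((Fin m → ℝ) ⧸ E) = n ∧
      t = radq 2 (ellipsoid p σ) (E : Set (Fin m → ℝ)) }

/-- The Hölder conjugate `p*` of `p ∈ (1, ∞]`, as a real number
(with the convention `(∞ : ℝ≥0∞).toReal = 0`, so `pstar ∞ = 1`; note `1/p* = 1 - 1/p`). -/
noncomputable def pstar (p : ℝ≥0∞) : ℝ := (1 - 1 / p.toReal)⁻¹

open Module (finrank)
open scoped BigOperators Topology

/-!
Write `β = 1 - 1 / p`.

A subspace of dimension `m - n` contains an extreme point of its section of the cube `[-1, 1] ^ m`,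
and such a point has `m - n` coordinates of modulus one. Scaling it into the ellipsoid and taking
`m = 2 * n` shows that the rate is at most `λ + 1 / p - 1 / 2`. For `p ≤ 2`, some standard basis
vector has a large projection onto the subspace, by averaging over the basis; the projection lies in
a multiple of the `ℓ_p`-ball as long as `n ≤ m ^ (2 * β)`. Hence the radius is then at least a
constant times `m ^ (-λ)`, and `m ≈ n ^ (1 / (2 * β))` gives the bound `λ / (2 * β)`.

Conversely, for `p ≥ 2` the subspace on which the first `n` coordinates vanish has the required
radius by Hölder's inequality. For `p ≤ 2`, half of the codimension is spent on the first `n / 2`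
coordinates, the other half on the kernel of a random sign matrix acting on the coordinates
`n / 2 ≤ j < n ^ K`. Maurey's empirical method shows that on this kernel the `ℓ_2`-norm is at most
`4 / √k` times the `ℓ_1`-norm, with `k ≈ n` up to logarithms. The coordinates beyond `n ^ K`
contribute at most `n ^ (-K * λ)`, and `K` is chosen to balance both contributions.
-/

/-! ### Sections of ellipsoids -/

section Ellipsoid

variable {m n : ℕ} {p : ℝ≥0∞} {σ x : Fin m → ℝ}

lemma lpnorm_nonneg (p : ℝ≥0∞) (x : Fin m → ℝ) : 0 ≤ lpnorm p x := by
  unfold lpnorm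
  split_ifs
  · exact Real.iSup_nonneg fun j => abs_nonneg _
  · positivity

lemma lpnorm_two (x : Fin m → ℝ) : lpnorm 2 x = √(∑ j, x j ^ 2) := by
  simp [lpnorm, Real.sqrt_eq_rpow]

lemma mem_ellipsoid_top : x ∈ ellipsoid ∞ σ ↔ ∀ j, |x j / σ j| ≤ 1 := by
  simp only [ellipsoid, lpnorm, if_true, Set.mem_ofPred_eq]
  exact ⟨fun h j => (le_ciSup (Set.finite_range fun j => |x j / σ j|).bddAbove j).trans h,
    fun h => Real.iSup_le h zero_le_one⟩

lemma rpow_le_one_iff_left {a r : ℝ} (ha : 0 ≤ a) (hr : 0 < r) : a ^ r ≤ 1 ↔ a ≤ 1 := by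
  simpa using Real.rpow_le_rpow_iff ha zero_le_one hr

lemma mem_ellipsoid_iff_sum_rpow_le_one (hp₀ : p ≠ 0) (hp : p ≠ ∞) :
    x ∈ ellipsoid p σ ↔ ∑ j, |x j / σ j| ^ p.toReal ≤ 1 := by
  simp only [ellipsoid, lpnorm, if_neg hp, Set.mem_ofPred_eq]
  exact rpow_le_one_iff_left (by positivity) (one_div_pos.2 (ENNReal.toReal_pos hp₀ hp))

lemma abs_div_le_one_of_mem_ellipsoid (hp₀ : p ≠ 0) (hx : x ∈ ellipsoid p σ) (j : Fin m) :
    |x j / σ j| ≤ 1 := by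
  rcases eq_or_ne p ∞ with rfl | hp
  · exact mem_ellipsoid_top.1 hx j
  · have hterm : |x j / σ j| ^ p.toReal ≤ 1 :=
      (Finset.single_le_sum (f := fun j => |x j / σ j| ^ p.toReal) (fun j _ => by positivity)
        (Finset.mem_univ j)).trans ((mem_ellipsoid_iff_sum_rpow_le_one hp₀ hp).1 hx)
    exact (rpow_le_one_iff_left (abs_nonneg _) (ENNReal.toReal_pos hp₀ hp)).1 hterm

lemma abs_le_of_mem_ellipsoid (hp₀ : p ≠ 0) (hσ : ∀ j, 0 < σ j) (hx : x ∈ ellipsoid p σ)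
    (j : Fin m) : |x j| ≤ σ j := by
  have h := abs_div_le_one_of_mem_ellipsoid hp₀ hx j
  rwa [abs_div, abs_of_pos (hσ j), div_le_one (hσ j)] at h

lemma mem_ellipsoid_of_abs_div_le (hp₀ : p ≠ 0)
    (hx : ∀ j, |x j / σ j| ≤ (m : ℝ) ^ (-(1 / p.toReal))) : x ∈ ellipsoid p σ := by
  rcases eq_or_ne p ∞ with rfl | hp
  · exact mem_ellipsoid_top.2 (by simpa using hx)
  have hP : 0 < p.toReal := ENNReal.toReal_pos hp₀ hp
  rw [mem_ellipsoid_iff_sum_rpow_le_one hp₀ hp]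
  calc ∑ j, |x j / σ j| ^ p.toReal
      ≤ ∑ _j : Fin m, ((m : ℝ) ^ (-(1 / p.toReal))) ^ p.toReal := by gcongr with j; exact hx j
    _ = m * (m : ℝ)⁻¹ := by
        rw [← Real.rpow_mul (Nat.cast_nonneg m), neg_mul, one_div_mul_cancel hP.ne',
          Real.rpow_neg_one, Finset.sum_const, Finset.card_fin, nsmul_eq_mul]
    _ ≤ 1 := mul_inv_le_one

lemma radq_nonneg (q : ℝ≥0∞) (K E : Set (Fin m → ℝ)) : 0 ≤ radq q K E := by
  refine Real.sSup_nonneg ?_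
  rintro _ ⟨x, -, rfl⟩
  exact lpnorm_nonneg q x

lemma exists_le_finrank_quotient_eq {K V : Type*} [DivisionRing K] [AddCommGroup V] [Module K V]
    [FiniteDimensional K V] (E : Submodule K V) (hE : finrank K (V ⧸ E) ≤ n)
    (hn : n ≤ finrank K V) : ∃ F ≤ E, finrank K (V ⧸ F) = n := by
  have hEV := E.finrank_quotient_add_finrank
  obtain ⟨f, hf⟩ := exists_linearIndependent_of_le_finrank (R := K) (M := E)
    (show finrank K V - n ≤ finrank K E by omega)
  have hf' : LinearIndependent K (E.subtype ∘ f) := hf.map' E.subtype E.ker_subtype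
  refine ⟨Submodule.span K (Set.range (E.subtype ∘ f)), ?_, ?_⟩
  · rw [Submodule.span_le]
    rintro _ ⟨i, rfl⟩
    exact (f i).2
  · have hFV := (Submodule.span K (Set.range (E.subtype ∘ f))).finrank_quotient_add_finrank
    rw [finrank_span_eq_card hf', Fintype.card_fin] at hFV
    omega

lemma finrank_quotient_ker_le {K V W : Type*} [DivisionRing K] [AddCommGroup V] [Module K V]
    [AddCommGroup W] [Module K W] [FiniteDimensional K W] (A : V →ₗ[K] W) :
    finrank K (V ⧸ A.ker) ≤ finrank K W :=
  A.quotKerEquivRange.finrank_eq.trans_le (Submodule.finrank_le _)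

lemma finrank_quotient_inf_le {K V : Type*} [DivisionRing K] [AddCommGroup V] [Module K V]
    [FiniteDimensional K V] (E F : Submodule K V) :
    finrank K (V ⧸ E ⊓ F) ≤ finrank K (V ⧸ E) + finrank K (V ⧸ F) := by
  have hE := E.finrank_quotient_add_finrank
  have hF := F.finrank_quotient_add_finrank
  have hEF := (E ⊓ F).finrank_quotient_add_finrank
  have hsup := Submodule.finrank_sup_add_finrank_inf_eq E F
  have hle := (E ⊔ F).finrank_le
  omega

lemma minrad_le_sqrt (E : Submodule ℝ (Fin m → ℝ)) (hE : finrank ℝ ((Fin m → ℝ) ⧸ E) ≤ n)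
    (hn : n ≤ m) {B : ℝ} (h : ∀ x ∈ ellipsoid p σ, x ∈ E → ∑ j, x j ^ 2 ≤ B) :
    minrad p σ n ≤ √B := by
  obtain ⟨F, hFE, hF⟩ := exists_le_finrank_quotient_eq E hE (by simpa using hn)
  calc minrad p σ n ≤ radq 2 (ellipsoid p σ) (F : Set (Fin m → ℝ)) := by
        refine csInf_le ⟨0, ?_⟩ ⟨F, hF, rfl⟩
        rintro _ ⟨E, -, rfl⟩
        exact radq_nonneg _ _ _
    _ ≤ √B := by
        refine Real.sSup_le ?_ (Real.sqrt_nonneg B)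
        rintro _ ⟨x, ⟨hx, hxF⟩, rfl⟩
        rw [lpnorm_two]
        exact Real.sqrt_le_sqrt (h x hx (hFE hxF))

lemma bddAbove_lpnorm_two_image_ellipsoid (hp₀ : p ≠ 0) (hσ : ∀ j, 0 < σ j) :
    BddAbove (lpnorm 2 '' ellipsoid p σ) := by
  refine ⟨√(∑ j, σ j ^ 2), ?_⟩
  rintro _ ⟨x, hx, rfl⟩
  rw [lpnorm_two]
  refine Real.sqrt_le_sqrt (Finset.sum_le_sum fun j _ => sq_le_sq.2 ?_)
  rw [abs_of_pos (hσ j)]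
  exact abs_le_of_mem_ellipsoid hp₀ hσ hx j

lemma le_minrad (hp₀ : p ≠ 0) (hσ : ∀ j, 0 < σ j) (hn : n ≤ m) {t : ℝ}
    (h : ∀ E : Submodule ℝ (Fin m → ℝ), finrank ℝ ((Fin m → ℝ) ⧸ E) = n →
      ∃ x ∈ E, x ∈ ellipsoid p σ ∧ t ^ 2 ≤ ∑ j, x j ^ 2) : t ≤ minrad p σ n := by
  refine le_csInf ?_ ?_
  · obtain ⟨F, -, hF⟩ := exists_le_finrank_quotient_eq (⊤ : Submodule ℝ (Fin m → ℝ))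
      (Module.finrank_zero_of_subsingleton.trans_le n.zero_le) (by simpa using hn)
    exact ⟨_, F, hF, rfl⟩
  · rintro _ ⟨E, hE, rfl⟩
    obtain ⟨x, hxE, hx, ht⟩ := h E hE
    calc t ≤ lpnorm 2 x := by rw [lpnorm_two]; exact Real.le_sqrt_of_sq_le ht
      _ ≤ radq 2 (ellipsoid p σ) E :=
          le_csSup ((bddAbove_lpnorm_two_image_ellipsoid hp₀ hσ).mono
            (Set.image_mono Set.inter_subset_left)) ⟨x, ⟨hx, hxE⟩, rfl⟩

end Ellipsoid

/-! ### Random signs -/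

lemma exp_neg_le_quadratic {z : ℝ} (hz : 0 ≤ z) : Real.exp (-z) ≤ 1 - z + z ^ 2 / 2 := by
  have hpos : 0 < 1 - z + z ^ 2 / 2 := by nlinarith [sq_nonneg (z - 1)]
  rw [Real.exp_neg, inv_le_comm₀ (Real.exp_pos _) hpos]
  refine le_trans ?_ (Real.quadratic_le_exp_of_nonneg hz)
  rw [inv_le_iff_one_le_mul₀ hpos]
  nlinarith [sq_nonneg (z ^ 2)]

section RandomSigns

lemma intUnit_cast_sq (u : ℤˣ) : ((u : ℤ) : ℝ) ^ 2 = 1 := by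
  rcases Int.units_eq_one_or u with rfl | rfl <;> simp

variable {ι : Type*}

/-- The random signed sum `∑ ε j * y j` over `s`. Signs are modelled as functions `ε : ι → ℤˣ`,
and expectations over independent uniform signs as averages over all of them. -/
def signedSum (s : Finset ι) (y : ι → ℝ) (ε : ι → ℤˣ) : ℝ := ∑ j ∈ s, ((ε j : ℤ) : ℝ) * y j

lemma signedSum_update_of_notMem {s : Finset ι} {a : ι} (ha : a ∉ s) (y : ι → ℝ) (ε : ι → ℤˣ)
    (u : ℤˣ) : signedSum s y (Function.update ε a u) = signedSum s y ε :=
  Finset.sum_congr rfl fun j hj => by rw [Function.update_of_ne (ne_of_mem_of_not_mem hj ha)]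

lemma le_sum_signedSum_sq_of_prod_exp_neg_lt {s : Finset ι} {y : ι → ℝ} {n : ℕ}
    {A : Fin n → ι → ℤˣ} (hy : 0 < ∑ j ∈ s, y j ^ 2)
    (hA : ∏ i, Real.exp (-(signedSum s y (A i) ^ 2 / (3 * ∑ j ∈ s, y j ^ 2))) < (11 / 12) ^ n) :
    n * (∑ j ∈ s, y j ^ 2) / 4 ≤ ∑ i, signedSum s y (A i) ^ 2 := by
  have hexp : ((11 : ℝ) / 12) ^ n ≤ Real.exp (-(n / 12)) := by
    rw [show -((n : ℝ) / 12) = n * (-(1 / 12)) by ring, Real.exp_nat_mul]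
    gcongr
    linarith [Real.add_one_le_exp (-(1 / 12) : ℝ)]
  rw [← Real.exp_sum] at hA
  have hlt := Real.exp_lt_exp.1 (hA.trans_le hexp)
  rw [Finset.sum_neg_distrib, neg_lt_neg_iff, ← Finset.sum_div, lt_div_iff₀ (by positivity)] at hlt
  linarith

section Expectation

variable [Fintype ι]

lemma expect_sign_mul_eq_zero (a : ι) {F : (ι → ℤˣ) → ℝ}
    (hF : ∀ ε u, F (Function.update ε a u) = F ε) :
    𝔼 ε : ι → ℤˣ, ((ε a : ℤ) : ℝ) * F ε = 0 := by
  let flip : (ι → ℤˣ) → ι → ℤˣ := fun ε => Function.update ε a (-ε a)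
  have hflip : Function.Involutive flip := fun ε => by simp [flip]
  have hneg : 𝔼 ε : ι → ℤˣ, ((ε a : ℤ) : ℝ) * F ε = 𝔼 ε : ι → ℤˣ, -(((ε a : ℤ) : ℝ) * F ε) :=
    Fintype.expect_equiv hflip.toPerm _ _ fun ε => by simp [flip, hF]
  rw [Finset.expect_neg_distrib] at hneg
  linarith

lemma expect_signedSum_sq (s : Finset ι) (y : ι → ℝ) :
    𝔼 ε, signedSum s y ε ^ 2 = ∑ j ∈ s, y j ^ 2 := by
  induction s using Finset.induction_on with
  | empty => simp [signedSum]
  | insert a s ha ih =>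
    have hexpand (ε : ι → ℤˣ) : signedSum (insert a s) y ε ^ 2 =
        y a ^ 2 + signedSum s y ε ^ 2 + (ε a : ℤ) * (2 * y a * signedSum s y ε) := by
      rw [signedSum, Finset.sum_insert ha, ← signedSum]
      linear_combination y a ^ 2 * intUnit_cast_sq (ε a)
    have hodd := expect_sign_mul_eq_zero a (F := fun ε => 2 * y a * signedSum s y ε)
      fun ε u => by rw [signedSum_update_of_notMem ha]
    simp only [hexpand, Finset.expect_add_distrib, Fintype.expect_const, hodd, ih,
      Finset.sum_insert ha, add_zero]

lemma expect_signedSum_pow_four_le (s : Finset ι) (y : ι → ℝ) :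
    𝔼 ε, signedSum s y ε ^ 4 ≤ 3 * (∑ j ∈ s, y j ^ 2) ^ 2 := by
  induction s using Finset.induction_on with
  | empty => simp [signedSum]
  | insert a s ha ih =>
    have hexpand (ε : ι → ℤˣ) : signedSum (insert a s) y ε ^ 4 =
        y a ^ 4 + 6 * y a ^ 2 * signedSum s y ε ^ 2 + signedSum s y ε ^ 4 +
          (ε a : ℤ) * (4 * y a ^ 3 * signedSum s y ε + 4 * y a * signedSum s y ε ^ 3) := by
      rw [signedSum, Finset.sum_insert ha, ← signedSum]
      linear_combination (y a ^ 4 * (((ε a : ℤ) : ℝ) ^ 2 + 1) +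
        4 * (ε a : ℤ) * y a ^ 3 * signedSum s y ε + 6 * y a ^ 2 * signedSum s y ε ^ 2) *
          intUnit_cast_sq (ε a)
    have hodd := expect_sign_mul_eq_zero a
      (F := fun ε => 4 * y a ^ 3 * signedSum s y ε + 4 * y a * signedSum s y ε ^ 3)
      fun ε u => by rw [signedSum_update_of_notMem ha]
    simp only [hexpand, Finset.expect_add_distrib, Fintype.expect_const, hodd,
      ← Finset.mul_expect, expect_signedSum_sq, Finset.sum_insert ha]
    nlinarith [sq_nonneg (y a ^ 2)]

lemma expect_exp_neg_signedSum_sq_le {s : Finset ι} {y : ι → ℝ} (hy : 0 < ∑ j ∈ s, y j ^ 2) :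
    𝔼 ε, Real.exp (-(signedSum s y ε ^ 2 / (3 * ∑ j ∈ s, y j ^ 2))) ≤ 5 / 6 := by
  set Y := ∑ j ∈ s, y j ^ 2
  calc 𝔼 ε, Real.exp (-(signedSum s y ε ^ 2 / (3 * Y)))
      ≤ 𝔼 ε, (1 - signedSum s y ε ^ 2 / (3 * Y) + signedSum s y ε ^ 4 / (18 * Y ^ 2)) := by
        refine Finset.expect_le_expect fun ε _ => (exp_neg_le_quadratic (by positivity)).trans_eq ?_
        field_simp
        ring
    _ = 1 - Y / (3 * Y) + (𝔼 ε, signedSum s y ε ^ 4) / (18 * Y ^ 2) := by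
        rw [Finset.expect_add_distrib, Finset.expect_sub_distrib, Fintype.expect_const,
          ← Finset.expect_div, ← Finset.expect_div, expect_signedSum_sq]
    _ ≤ 1 - Y / (3 * Y) + 3 * Y ^ 2 / (18 * Y ^ 2) := by
        gcongr
        exact expect_signedSum_pow_four_le s y
    _ = 5 / 6 := by field_simp; norm_num

lemma expect_prod_exp_neg_signedSum_sq_le {s : Finset ι} {y : ι → ℝ}
    (hy : 0 < ∑ j ∈ s, y j ^ 2) (n : ℕ) :
    𝔼 A : Fin n → ι → ℤˣ, ∏ i, Real.exp (-(signedSum s y (A i) ^ 2 / (3 * ∑ j ∈ s, y j ^ 2))) ≤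
      (5 / 6) ^ n := by
  have hpow := Finset.expect_pow Finset.univ
    (fun ε : ι → ℤˣ => Real.exp (-(signedSum s y ε ^ 2 / (3 * ∑ j ∈ s, y j ^ 2)))) n
  rw [Fintype.piFinset_univ] at hpow
  rw [← hpow]
  exact pow_le_pow_left₀ (Finset.expect_nonneg fun ε _ => (Real.exp_pos _).le)
    (expect_exp_neg_signedSum_sq_le hy) n

end Expectation

lemma exists_signs_forall_le_sum_signedSum_sq [Finite ι] {κ : Type*} [Fintype κ] (s : Finset ι)
    (n : ℕ) (Y : κ → ι → ℝ) (h : (Fintype.card κ : ℝ) * (10 / 11) ^ n < 1) :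
    ∃ A : Fin n → ι → ℤˣ, ∀ g,
      n * (∑ j ∈ s, Y g j ^ 2) / 4 ≤ ∑ i, signedSum s (Y g) (A i) ^ 2 := by
  cases nonempty_fintype ι
  let T : Finset κ := {g | 0 < ∑ j ∈ s, Y g j ^ 2}
  let F (g : κ) (A : Fin n → ι → ℤˣ) : ℝ :=
    ∏ i, Real.exp (-(signedSum s (Y g) (A i) ^ 2 / (3 * ∑ j ∈ s, Y g j ^ 2)))
  have hF (g : κ) (A : Fin n → ι → ℤˣ) : 0 ≤ F g A := Finset.prod_nonneg fun i _ => by positivity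
  have hmean : 𝔼 A, ∑ g ∈ T, F g A < (11 / 12) ^ n := by
    rw [Finset.expect_sum_comm]
    calc ∑ g ∈ T, 𝔼 A, F g A ≤ ∑ _g ∈ T, (5 / 6 : ℝ) ^ n := Finset.sum_le_sum fun g hg =>
          expect_prod_exp_neg_signedSum_sq_le (Finset.mem_filter.1 hg).2 n
      _ ≤ Fintype.card κ * (5 / 6 : ℝ) ^ n := by
          rw [Finset.sum_const, nsmul_eq_mul]
          gcongr
          exact T.card_le_univ
      _ = Fintype.card κ * (10 / 11) ^ n * (11 / 12 : ℝ) ^ n := by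
          rw [mul_assoc, ← mul_pow]
          norm_num
      _ < (11 / 12) ^ n := mul_lt_of_lt_one_left (by positivity) h
  obtain ⟨A, -, hA⟩ := Finset.exists_lt_of_expect_lt Finset.univ_nonempty hmean
  refine ⟨A, fun g => ?_⟩
  rcases (Finset.sum_nonneg fun j _ => sq_nonneg (Y g j) : 0 ≤ ∑ j ∈ s, Y g j ^ 2).eq_or_lt
    with hg | hg
  · rw [← hg, mul_zero, zero_div]
    positivity
  · have hgT : g ∈ T := Finset.mem_filter.2 ⟨Finset.mem_univ g, hg⟩
    exact le_sum_signedSum_sq_of_prod_exp_neg_lt hg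
      ((Finset.single_le_sum (fun g _ => hF g A) hgT).trans_lt hA)

end RandomSigns

/-! ### Maurey's empirical method -/

section Maurey

variable {α V W : Type*} [NormedAddCommGroup V] [InnerProductSpace ℝ V]
  [NormedAddCommGroup W] [InnerProductSpace ℝ W] {v : α → V} {x : V} {B : ℝ}

lemma exists_norm_add_sub_sq_le_of_mem_convexHull (hv : ∀ a, ‖v a‖ ^ 2 ≤ B)
    (hx : x ∈ convexHull ℝ (Set.range v)) (u : V) :
    ∃ a, ‖u + v a - x‖ ^ 2 ≤ ‖u‖ ^ 2 + B := by
  obtain ⟨_, ⟨a, rfl⟩, ha⟩ :=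
    ((innerₗ V (u - x)).concaveOn convex_univ).exists_le_of_mem_convexHull (Set.subset_univ _) hx
  have hinner : inner ℝ (u - x) (v a) ≤ inner ℝ (u - x) x := ha
  refine ⟨a, ?_⟩
  have hexpand : ‖u + v a - x‖ ^ 2 =
      ‖u‖ ^ 2 + ‖v a‖ ^ 2 - ‖x‖ ^ 2 + 2 * (inner ℝ (u - x) (v a) - inner ℝ (u - x) x) := by
    rw [show u + v a - x = (u - x) + v a by abel, norm_add_sq_real, norm_sub_sq_real,
      inner_sub_left _ _ x, real_inner_self_eq_norm_sq]
    ring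
  nlinarith [hv a, sq_nonneg ‖x‖]

lemma exists_norm_sum_sub_smul_sq_le_of_mem_convexHull (hv : ∀ a, ‖v a‖ ^ 2 ≤ B)
    (hx : x ∈ convexHull ℝ (Set.range v)) (k : ℕ) :
    ∃ g : Fin k → α, ‖∑ l, v (g l) - k • x‖ ^ 2 ≤ k * B := by
  induction k with
  | zero => exact ⟨Fin.elim0, by simp⟩
  | succ k ih =>
    obtain ⟨g, hg⟩ := ih
    obtain ⟨a, ha⟩ :=
      exists_norm_add_sub_sq_le_of_mem_convexHull hv hx (∑ l, v (g l) - k • x)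
    refine ⟨Fin.snoc g a, ?_⟩
    rw [Fin.sum_univ_castSucc, succ_nsmul, ← sub_sub, add_sub_right_comm]
    simp only [Fin.snoc_castSucc, Fin.snoc_last]
    push_cast
    linarith

-- Maurey's method approximates `(x, A x) = (x, 0)` in the product space, so an empirical mean of
-- the `v a` close to `x` has a small image under `A` and hence is itself small.
lemma card_mul_norm_sq_le_of_map_eq_zero (A : V →ₗ[ℝ] W) (hv : ∀ a, ‖v a‖ ^ 2 ≤ 1)
    (hAv : ∀ a, ‖A (v a)‖ ^ 2 ≤ 1) {k : ℕ}
    (hA : ∀ g : Fin k → α, ‖∑ l, v (g l)‖ ^ 2 ≤ 4 * ‖A (∑ l, v (g l))‖ ^ 2)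
    (hx : x ∈ convexHull ℝ (Set.range v)) (hAx : A x = 0) : k * ‖x‖ ^ 2 ≤ 16 := by
  let graph : V →ₗ[ℝ] WithLp 2 (V × W) :=
    (WithLp.linearEquiv 2 ℝ (V × W)).symm.toLinearMap ∘ₗ LinearMap.id.prod A
  have hnorm (z : V) : ‖graph z‖ ^ 2 = ‖z‖ ^ 2 + ‖A z‖ ^ 2 := WithLp.prod_norm_sq_eq_of_L2 _
  have hgraph : graph x ∈ convexHull ℝ (Set.range (graph ∘ v)) := by
    rw [Set.range_comp, ← graph.image_convexHull]
    exact Set.mem_image_of_mem _ hx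
  obtain ⟨g, hg⟩ := exists_norm_sum_sub_smul_sq_le_of_mem_convexHull (B := 2)
    (fun a => by rw [Function.comp_apply, hnorm]; linarith [hv a, hAv a]) hgraph k
  set y := ∑ l, v (g l) with hy
  have happrox : ‖y - k • x‖ ^ 2 + ‖A y‖ ^ 2 ≤ k * 2 := by
    simpa only [Function.comp_apply, ← map_sum, ← map_nsmul, ← map_sub, hnorm, ← hy, hAx,
      map_sub A, map_nsmul A, smul_zero, sub_zero] using hg
  have hsplit : ‖k • x‖ ^ 2 ≤ 2 * ‖y‖ ^ 2 + 2 * ‖y - k • x‖ ^ 2 := by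
    have := parallelogram_law_with_norm ℝ y (y - k • x)
    rw [sub_sub_cancel] at this
    nlinarith [sq_nonneg ‖y + (y - k • x)‖]
  have hsmul : ‖k • x‖ ^ 2 = k * (k * ‖x‖ ^ 2) := by
    rw [← Nat.cast_smul_eq_nsmul ℝ, norm_smul, Real.norm_natCast]
    ring
  rcases k.eq_zero_or_pos with rfl | hk
  · simp
  · refine le_of_mul_le_mul_left ?_ (Nat.cast_pos.2 hk : (0 : ℝ) < k)
    linarith [hA g, sq_nonneg ‖y - k • x‖]

end Maurey

section L1Kernel

variable {ι : Type*} [Fintype ι]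

/-- The vertices `± e_j` of the unit ball of `ℓ₁`. -/
noncomputable def crossPolytopeVertex (a : ι × ℤˣ) : EuclideanSpace ℝ ι :=
  EuclideanSpace.single a.1 ((a.2 : ℤ) : ℝ)

lemma norm_crossPolytopeVertex_sq (a : ι × ℤˣ) : ‖crossPolytopeVertex a‖ ^ 2 = 1 := by
  rw [crossPolytopeVertex, PiLp.norm_single, Real.norm_eq_abs, sq_abs, intUnit_cast_sq]

lemma exists_abs_mul_intUnit_eq (a : ℝ) : ∃ u : ℤˣ, |a| * ((u : ℤ) : ℝ) = a := by
  rcases abs_choice a with h | h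
  · exact ⟨1, by simp [h]⟩
  · exact ⟨-1, by simp [h]⟩

lemma mem_convexHull_range_crossPolytopeVertex {x : EuclideanSpace ℝ ι} (hx : ∑ j, |x j| = 1) :
    x ∈ convexHull ℝ (Set.range (crossPolytopeVertex (ι := ι))) := by
  choose u hu using fun j => exists_abs_mul_intUnit_eq (x j)
  have hsum : x = ∑ j, |x j| • crossPolytopeVertex (j, u j) := by
    ext i
    simp [crossPolytopeVertex, Pi.single_apply, hu]
  rw [hsum]
  exact (convex_convexHull ℝ _).sum_mem (fun j _ => abs_nonneg _) hx
    fun j _ => subset_convexHull ℝ _ ⟨(j, u j), rfl⟩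

/-- The `n × ι` matrix with entries `± 1 / √n` given by `ε`, as a linear map. -/
noncomputable def signMap {n : ℕ} (ε : Fin n → ι → ℤˣ) :
    EuclideanSpace ℝ ι →ₗ[ℝ] EuclideanSpace ℝ (Fin n) :=
  Matrix.toEuclideanLin (Matrix.of fun i j => (√n)⁻¹ * ((ε i j : ℤ) : ℝ))

lemma norm_signMap_sq {n : ℕ} (ε : Fin n → ι → ℤˣ) (x : EuclideanSpace ℝ ι) :
    ‖signMap ε x‖ ^ 2 = (∑ i, signedSum Finset.univ x (ε i) ^ 2) / n := by
  have hcoord (i : Fin n) : signMap ε x i = (√n)⁻¹ * signedSum Finset.univ x (ε i) := by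
    simp [signMap, signedSum, Matrix.mulVec, dotProduct, Finset.mul_sum, mul_assoc]
  simp only [EuclideanSpace.norm_sq_eq, hcoord, Real.norm_eq_abs, sq_abs, mul_pow, inv_pow,
    Real.sq_sqrt n.cast_nonneg, ← Finset.mul_sum]
  rw [inv_mul_eq_div]

lemma norm_signMap_crossPolytopeVertex_sq_le {n : ℕ} (ε : Fin n → ι → ℤˣ) (a : ι × ℤˣ) :
    ‖signMap ε (crossPolytopeVertex a)‖ ^ 2 ≤ 1 := by
  have hentry (i : Fin n) : signedSum Finset.univ (crossPolytopeVertex a) (ε i) ^ 2 = 1 := by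
    simp [signedSum, crossPolytopeVertex, mul_pow, intUnit_cast_sq]
  rw [norm_signMap_sq]
  simpa [hentry] using div_self_le_one (n : ℝ)

lemma exists_signMap_ker_norm_sq_le {n k : ℕ} (hn : n ≠ 0)
    (h : (2 * (Fintype.card ι : ℝ)) ^ k * (10 / 11) ^ n < 1) :
    ∃ ε : Fin n → ι → ℤˣ, ∀ x : EuclideanSpace ℝ ι, signMap ε x = 0 →
      k * ‖x‖ ^ 2 ≤ 16 * (∑ j, |x j|) ^ 2 := by
  obtain ⟨ε, hε⟩ := exists_signs_forall_le_sum_signedSum_sq (κ := Fin k → ι × ℤˣ) Finset.univ n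
    (fun g => (∑ l, crossPolytopeVertex (g l)).ofLp) (by
      simpa [mul_comm (Fintype.card ι : ℝ)] using h)
  have hlower (g : Fin k → ι × ℤˣ) : ‖∑ l, crossPolytopeVertex (g l)‖ ^ 2 ≤
      4 * ‖signMap ε (∑ l, crossPolytopeVertex (g l))‖ ^ 2 := by
    rw [norm_signMap_sq, EuclideanSpace.norm_sq_eq, ← mul_div_assoc, le_div_iff₀ (by positivity)]
    simp only [Real.norm_eq_abs, sq_abs]
    linarith [hε g]
  refine ⟨ε, fun x hx => ?_⟩
  set X := ∑ j, |x j| with hX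
  have hX_nonneg : 0 ≤ X := by positivity
  rcases hX_nonneg.eq_or_lt with hX₀ | hX₀
  · have hx₀ : x = 0 := by
      ext j
      exact abs_eq_zero.1 ((Finset.sum_eq_zero_iff_of_nonneg fun j _ => abs_nonneg (x j)).1
        hX₀.symm j (Finset.mem_univ j))
    simp [hx₀, ← hX₀]
  · have hnormalized : ∑ j, |(X⁻¹ • x) j| = 1 := by
      simp [abs_mul, abs_of_pos hX₀, ← Finset.mul_sum, ← hX, hX₀.ne']
    have hbound := card_mul_norm_sq_le_of_map_eq_zero (signMap ε)
      (fun a => (norm_crossPolytopeVertex_sq a).le) (norm_signMap_crossPolytopeVertex_sq_le ε)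
      hlower (mem_convexHull_range_crossPolytopeVertex hnormalized)
      (by rw [map_smul, hx, smul_zero])
    rw [norm_smul, norm_inv, Real.norm_of_nonneg hX₀.le, mul_pow, inv_pow, mul_left_comm,
      inv_mul_le_iff₀ (by positivity)] at hbound
    linarith

end L1Kernel

section CoordinateSubspaces

variable {ι : Type*}

/-- The subspace of the vectors whose coordinates in `H` vanish. -/
def vanishingOn (H : Finset ι) : Submodule ℝ (ι → ℝ) :=
  (LinearMap.funLeft ℝ ℝ (Subtype.val : H → ι)).ker

lemma mem_vanishingOn {H : Finset ι} {x : ι → ℝ} : x ∈ vanishingOn H ↔ ∀ j ∈ H, x j = 0 := by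
  simp [vanishingOn, funext_iff]

lemma finrank_quotient_vanishingOn_le (H : Finset ι) :
    finrank ℝ ((ι → ℝ) ⧸ vanishingOn H) ≤ H.card :=
  (finrank_quotient_ker_le _).trans_eq (by simp)

lemma exists_submodule_vanishing_sum_sq_le [Finite ι] (H S : Finset ι) {n k : ℕ} (hn : n ≠ 0)
    (h : (2 * (S.card : ℝ)) ^ k * (10 / 11) ^ n < 1) :
    ∃ E : Submodule ℝ (ι → ℝ), finrank ℝ ((ι → ℝ) ⧸ E) ≤ H.card + n ∧
      ∀ x ∈ E, (∀ j ∈ H, x j = 0) ∧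
        k * ∑ j ∈ S, x j ^ 2 ≤ 16 * (∑ j ∈ S, |x j|) ^ 2 := by
  obtain ⟨ε, hε⟩ := exists_signMap_ker_norm_sq_le (ι := S) hn (by simpa using h)
  let A : (ι → ℝ) →ₗ[ℝ] EuclideanSpace ℝ (Fin n) :=
    signMap ε ∘ₗ (WithLp.linearEquiv 2 ℝ (S → ℝ)).symm.toLinearMap ∘ₗ
      LinearMap.funLeft ℝ ℝ (Subtype.val : S → ι)
  refine ⟨vanishingOn H ⊓ A.ker, ?_, fun x hx => ⟨mem_vanishingOn.1 hx.1, ?_⟩⟩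
  · refine (finrank_quotient_inf_le _ _).trans (add_le_add (finrank_quotient_vanishingOn_le H) ?_)
    simpa using finrank_quotient_ker_le A
  · have hx_block := hε (WithLp.toLp 2 fun j => x j) hx.2
    simpa only [EuclideanSpace.norm_sq_eq, Real.norm_eq_abs, sq_abs, Finset.sum_coe_sort S
      (fun j => x j ^ 2), Finset.sum_coe_sort S (fun j => |x j|)] using hx_block

end CoordinateSubspaces

/-! ### Large points in sections -/

section CubeSection

variable {ι : Type*}

lemma eventually_add_mul_abs_le_one {a b : ℝ} (ha : |a| ≤ 1) (hab : |a| = 1 → b = 0) :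
    ∀ᶠ t in 𝓝[>] (0 : ℝ), |a| + t * |b| ≤ 1 := by
  rcases ha.eq_or_lt with ha₁ | ha₁
  · simp [hab ha₁, ha₁]
  · have hlim : Filter.Tendsto (fun t : ℝ => |a| + t * |b|) (𝓝 0) (𝓝 (|a| + 0 * |b|)) :=
      Continuous.tendsto (by fun_prop) 0
    exact (hlim.eventually_le_const (by simpa using ha₁)).filter_mono nhdsWithin_le_nhds

lemma exists_pos_forall_abs_add_mul_le_one [Finite ι] {x v : ι → ℝ} (hx : ∀ j, |x j| ≤ 1)
    (hv : ∀ j, |x j| = 1 → v j = 0) :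
    ∃ t > 0, ∀ s : ℝ, |s| = t → ∀ j, |x j + s * v j| ≤ 1 := by
  obtain ⟨t, ht, ht₀⟩ := ((Filter.eventually_all.2 fun j =>
    eventually_add_mul_abs_le_one (hx j) (hv j)).and self_mem_nhdsWithin).exists
  refine ⟨t, ht₀, fun s hs j => ?_⟩
  calc |x j + s * v j| ≤ |x j| + |s * v j| := abs_add_le _ _
    _ = |x j| + t * |v j| := by rw [abs_mul, hs]
    _ ≤ 1 := ht j

variable [Fintype ι]

lemma finrank_le_card_abs_eq_one_of_mem_extremePoints {E : Submodule ℝ (ι → ℝ)} {x : ι → ℝ}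
    (hx : x ∈ Set.extremePoints ℝ ((E : Set (ι → ℝ)) ∩ Metric.closedBall 0 1)) :
    finrank ℝ E ≤ ({j | |x j| = 1} : Finset ι).card := by
  set S : Finset ι := {j | |x j| = 1}
  obtain ⟨⟨hxE, hxB⟩, hext⟩ := mem_extremePoints.1 hx
  have hmem_ball (y : ι → ℝ) : y ∈ Metric.closedBall 0 1 ↔ ∀ j, |y j| ≤ 1 := by
    rw [mem_closedBall_zero_iff, pi_norm_le_iff_of_nonneg zero_le_one]
    rfl
  by_contra! hlt
  have hker : (LinearMap.funLeft ℝ ℝ (Subtype.val : S → ι) ∘ₗ E.subtype).ker ≠ ⊥ :=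
    LinearMap.ker_ne_bot_of_finrank_lt (by simpa using hlt)
  obtain ⟨v, hv, hv₀⟩ := Submodule.exists_mem_ne_zero_of_ne_bot hker
  have hvS (j : ι) (hj : |x j| = 1) : (v : ι → ℝ) j = 0 :=
    mem_vanishingOn.1 hv j (Finset.mem_filter.2 ⟨Finset.mem_univ j, hj⟩)
  obtain ⟨t, ht₀, ht⟩ := exists_pos_forall_abs_add_mul_le_one ((hmem_ball x).1 hxB) hvS
  have hmem (s : ℝ) (hs : |s| = t) :
      x + s • (v : ι → ℝ) ∈ (E : Set (ι → ℝ)) ∩ Metric.closedBall 0 1 :=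
    ⟨E.add_mem hxE (E.smul_mem s v.2), (hmem_ball _).2 (ht s hs)⟩
  have hmid : x ∈ openSegment ℝ (x + t • (v : ι → ℝ)) (x + (-t) • (v : ι → ℝ)) :=
    ⟨1 / 2, 1 / 2, by norm_num, by norm_num, by norm_num, by module⟩
  have heq := (hext _ (hmem t (abs_of_pos ht₀)) _
    (hmem (-t) (by rw [abs_neg, abs_of_pos ht₀])) hmid).1
  rw [add_eq_left, smul_eq_zero] at heq
  exact hv₀ (Subtype.ext (heq.resolve_left ht₀.ne'))

lemma exists_mem_abs_le_one_finrank_le_sum_sq (E : Submodule ℝ (ι → ℝ)) :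
    ∃ x ∈ E, (∀ j, |x j| ≤ 1) ∧ (finrank ℝ E : ℝ) ≤ ∑ j, x j ^ 2 := by
  have hcompact : IsCompact ((E : Set (ι → ℝ)) ∩ Metric.closedBall 0 1) :=
    (isCompact_closedBall _ _).inter_left E.closed_of_finiteDimensional
  obtain ⟨x, hx⟩ := hcompact.extremePoints_nonempty ⟨0, E.zero_mem, by simp⟩
  obtain ⟨hxE, hxB⟩ := extremePoints_subset hx
  refine ⟨x, hxE, fun j => (norm_le_pi_norm x j).trans (mem_closedBall_zero_iff.1 hxB), ?_⟩
  calc (finrank ℝ E : ℝ) ≤ ({j | |x j| = 1} : Finset ι).card :=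
        Nat.cast_le.2 (finrank_le_card_abs_eq_one_of_mem_extremePoints hx)
    _ = ∑ j with |x j| = 1, x j ^ 2 := by
        rw [Finset.card_eq_sum_ones, Nat.cast_sum]
        refine Finset.sum_congr rfl fun j hj => ?_
        rw [← sq_abs, (Finset.mem_filter.1 hj).2, one_pow, Nat.cast_one]
    _ ≤ ∑ j, x j ^ 2 :=
        Finset.sum_le_sum_of_subset_of_nonneg (Finset.filter_subset _ _) fun _ _ _ => sq_nonneg _

end CubeSection

lemma mul_rpow_mul_sqrt_le_minrad {m n : ℕ} {p : ℝ≥0∞} {σ : Fin m → ℝ} {s : ℝ} (hp₀ : p ≠ 0)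
    (hs : 0 < s) (hσ : ∀ j, s ≤ σ j) (hn : n ≤ m) :
    s * (m : ℝ) ^ (-(1 / p.toReal)) * √(m - n) ≤ minrad p σ n := by
  refine le_minrad hp₀ (fun j => hs.trans_le (hσ j)) hn fun E hE => ?_
  have hdim : (finrank ℝ E : ℝ) = m - n := by
    have := E.finrank_quotient_add_finrank
    rw [hE, Module.finrank_fin_fun] at this
    rw [eq_sub_iff_add_eq']
    exact_mod_cast this
  obtain ⟨x, hxE, hx, hdim_le⟩ := exists_mem_abs_le_one_finrank_le_sum_sq E
  set c := s * (m : ℝ) ^ (-(1 / p.toReal)) with hc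
  have hc₀ : 0 ≤ c := by positivity
  refine ⟨c • x, E.smul_mem c hxE, mem_ellipsoid_of_abs_div_le hp₀ fun j => ?_, ?_⟩
  · have hσj : 0 < σ j := hs.trans_le (hσ j)
    rw [Pi.smul_apply, smul_eq_mul, abs_div, abs_mul, abs_of_nonneg hc₀, abs_of_pos hσj,
      div_le_iff₀ hσj]
    calc c * |x j| ≤ c := mul_le_of_le_one_right hc₀ (hx j)
      _ ≤ (m : ℝ) ^ (-(1 / p.toReal)) * σ j := by
          rw [hc, mul_comm]
          gcongr
          exact hσ j
  · simp only [Pi.smul_apply, smul_eq_mul, mul_pow, ← Finset.mul_sum]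
    rw [Real.sq_sqrt (by rw [sub_nonneg]; exact_mod_cast hn), ← hdim]
    gcongr

section ProjectedBasisVector

variable {ι : Type*} [Fintype ι]

lemma sum_norm_starProjection_sq {V : Type*} [NormedAddCommGroup V] [InnerProductSpace ℝ V]
    [FiniteDimensional ℝ V] (b : OrthonormalBasis ι ℝ V) (K : Submodule ℝ V) :
    ∑ i, ‖K.starProjection (b i)‖ ^ 2 = finrank ℝ K := by
  have hproj : LinearMap.IsProj K K.starProjection.toLinearMap :=
    ⟨K.starProjection_apply_mem, fun _ hx => K.starProjection_eq_self_iff.2 hx⟩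
  rw [← hproj.trace, LinearMap.trace_eq_sum_inner _ b]
  refine Finset.sum_congr rfl fun i _ => ?_
  rw [ContinuousLinearMap.coe_coe, real_inner_comm]
  exact (K.re_inner_starProjection_eq_normSq (b i)).symm

lemma exists_single_sub_mem_sum_sq_le [Nonempty ι] (E : Submodule ℝ (ι → ℝ)) :
    ∃ (j : ι) (w : ι → ℝ), Pi.single j 1 - w ∈ E ∧ w j = ∑ i, w i ^ 2 ∧
      ∑ i, w i ^ 2 ≤ finrank ℝ ((ι → ℝ) ⧸ E) / Fintype.card ι := by
  let L := WithLp.linearEquiv 2 ℝ (ι → ℝ)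
  let F : Submodule ℝ (EuclideanSpace ℝ ι) := E.comap L.toLinearMap
  have hdim : finrank ℝ Fᗮ = finrank ℝ ((ι → ℝ) ⧸ E) := by
    have hFE : finrank ℝ F = finrank ℝ E := by
      rw [← Submodule.map_comap_eq_of_surjective L.surjective E]
      exact (LinearEquiv.finrank_map_eq L F).symm
    have hE := E.finrank_quotient_add_finrank
    have hF := F.finrank_add_finrank_orthogonal
    rw [Module.finrank_fintype_fun_eq_card] at hE
    rw [finrank_euclideanSpace] at hF
    omega
  let b := EuclideanSpace.basisFun ι ℝ
  obtain ⟨j, -, hj⟩ : ∃ j ∈ Finset.univ, ‖Fᗮ.starProjection (b j)‖ ^ 2 ≤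
      finrank ℝ ((ι → ℝ) ⧸ E) / Fintype.card ι := by
    refine Finset.exists_le_of_sum_le Finset.univ_nonempty ?_
    rw [sum_norm_starProjection_sq, hdim, Finset.sum_const, Finset.card_univ, nsmul_eq_mul,
      mul_div_cancel₀ _ (Nat.cast_ne_zero.2 Fintype.card_ne_zero)]
  have hnorm := EuclideanSpace.real_norm_sq_eq (Fᗮ.starProjection (b j))
  refine ⟨j, L (Fᗮ.starProjection (b j)), ?_, ?_, hnorm ▸ hj⟩
  · have hmem := Fᗮ.sub_starProjection_mem_orthogonal (b j)
    rw [Submodule.orthogonal_orthogonal] at hmem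
    have hb : L (b j) = Pi.single j 1 := by simp [L, b]
    rw [← hb, ← map_sub]
    exact hmem
  · refine Eq.trans ?_ hnorm
    have hinner := Fᗮ.re_inner_starProjection_eq_normSq (b j)
    simpa [L, b, EuclideanSpace.inner_single_right] using hinner

lemma sum_abs_rpow_le_one {r : ℝ} {w : ι → ℝ} (hr₀ : 0 < r) (hr : r ≤ 2)
    (hw : (Fintype.card ι : ℝ) ^ (2 / r - 1) * ∑ i, w i ^ 2 ≤ 1) : ∑ i, |w i| ^ r ≤ 1 := by
  have hpow (i : ι) : |(|w i| ^ r)| ^ (2 / r) = w i ^ 2 := by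
    rw [abs_of_nonneg (by positivity), ← Real.rpow_mul (abs_nonneg _), mul_div_cancel₀ _ hr₀.ne',
      Real.rpow_two, sq_abs]
  rw [← rpow_le_one_iff_left (by positivity) (div_pos two_pos hr₀)]
  calc (∑ i, |w i| ^ r) ^ (2 / r) = (∑ i, |(|w i| ^ r)|) ^ (2 / r) := by
        simp only [abs_of_nonneg (Real.rpow_nonneg (abs_nonneg _) r)]
    _ ≤ (Fintype.card ι : ℝ) ^ (2 / r - 1) * ∑ i, |(|w i| ^ r)| ^ (2 / r) :=
        Real.rpow_sum_le_const_mul_sum_rpow _ _ ((one_le_div hr₀).2 hr)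
    _ ≤ 1 := by simpa only [hpow] using hw

lemma sum_abs_single_sub_rpow_le {r : ℝ} {j : ι} {w : ι → ℝ} (hr : 0 ≤ r) (hj : |1 - w j| ≤ 1) :
    ∑ i, |(Pi.single j 1 - w : ι → ℝ) i| ^ r ≤ 1 + ∑ i, |w i| ^ r := by
  have hterm (i : ι) :
      |(Pi.single j 1 - w : ι → ℝ) i| ^ r ≤ (if i = j then 1 else 0) + |w i| ^ r := by
    rcases eq_or_ne i j with rfl | hi
    · simpa using (Real.rpow_le_one (abs_nonneg _) hj hr).trans
        (le_add_of_nonneg_right (by positivity))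
    · simp [hi]
  simpa [Finset.sum_add_distrib] using Finset.sum_le_sum fun i (_ : i ∈ Finset.univ) => hterm i

lemma sum_single_sub_sq (j : ι) (w : ι → ℝ) :
    ∑ i, (Pi.single j 1 - w : ι → ℝ) i ^ 2 = 1 - 2 * w j + ∑ i, w i ^ 2 := by
  have hterm (i : ι) :
      (Pi.single j 1 - w : ι → ℝ) i ^ 2 = (if i = j then 1 - 2 * w i else 0) + w i ^ 2 := by
    rcases eq_or_ne i j with rfl | hi
    · simp only [Pi.sub_apply, Pi.single_eq_same, if_true]
      ring
    · simp [hi]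
  rw [Finset.sum_congr rfl fun i _ => hterm i]
  simp [Finset.sum_add_distrib]

lemma exists_mem_sum_abs_rpow_le_two [Nonempty ι] {r : ℝ} (hr₀ : 0 < r) (hr : r ≤ 2)
    (E : Submodule ℝ (ι → ℝ)) (hE : 2 * finrank ℝ ((ι → ℝ) ⧸ E) ≤ Fintype.card ι)
    (hEr : (finrank ℝ ((ι → ℝ) ⧸ E) : ℝ) ≤ (Fintype.card ι : ℝ) ^ (2 * (1 - 1 / r))) :
    ∃ x ∈ E, ∑ i, |x i| ^ r ≤ 2 ∧ 1 / 2 ≤ ∑ i, x i ^ 2 := by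
  obtain ⟨j, w, hwE, hwj, hw⟩ := exists_single_sub_mem_sum_sq_le E
  have hcard : (0 : ℝ) < Fintype.card ι := Nat.cast_pos.2 Fintype.card_pos
  have hw_half : ∑ i, w i ^ 2 ≤ 1 / 2 := by
    refine hw.trans ((div_le_iff₀ hcard).2 ?_)
    have : (2 * finrank ℝ ((ι → ℝ) ⧸ E) : ℝ) ≤ Fintype.card ι := by exact_mod_cast hE
    linarith
  have hw_rpow : ∑ i, |w i| ^ r ≤ 1 := by
    refine sum_abs_rpow_le_one hr₀ hr ?_
    calc (Fintype.card ι : ℝ) ^ (2 / r - 1) * ∑ i, w i ^ 2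
        ≤ (Fintype.card ι : ℝ) ^ (2 / r - 1) *
            ((Fintype.card ι : ℝ) ^ (2 * (1 - 1 / r)) / Fintype.card ι) := by
          gcongr
          exact hw.trans (by gcongr)
      _ = 1 := by
          rw [← Real.rpow_sub_one hcard.ne', ← Real.rpow_add hcard]
          ring_nf
          exact Real.rpow_zero _
  have hwj_mem : w j ∈ Set.Icc 0 (1 / 2) :=
    hwj ▸ ⟨Finset.sum_nonneg fun i _ => sq_nonneg _, hw_half⟩
  refine ⟨Pi.single j 1 - w, hwE, ?_, ?_⟩
  · have hj : |1 - w j| ≤ 1 := abs_le.2 ⟨by linarith [hwj_mem.2], by linarith [hwj_mem.1]⟩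
    linarith [sum_abs_single_sub_rpow_le hr₀.le hj]
  · linarith [sum_single_sub_sq j w, hwj_mem.2]

end ProjectedBasisVector

lemma smul_mem_ellipsoid_of_sum_rpow_le {m : ℕ} {p : ℝ≥0∞} {σ x : Fin m → ℝ} {s C : ℝ}
    (hp₁ : 1 ≤ p) (hp : p ≠ ∞) (hs : 0 < s) (hσ : ∀ j, s ≤ σ j) (hC : 1 ≤ C)
    (hx : ∑ j, |x j| ^ p.toReal ≤ C) : (s / C) • x ∈ ellipsoid p σ := by
  have hC₀ : 0 < C := zero_lt_one.trans_le hC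
  have hP : 1 ≤ p.toReal := by simpa using ENNReal.toReal_mono hp hp₁
  rw [mem_ellipsoid_iff_sum_rpow_le_one (zero_lt_one.trans_le hp₁).ne' hp]
  calc ∑ j, |((s / C) • x) j / σ j| ^ p.toReal ≤ ∑ j, C⁻¹ * |x j| ^ p.toReal := by
        refine Finset.sum_le_sum fun j _ => ?_
        have hσj : 0 < σ j := hs.trans_le (hσ j)
        have hle : |((s / C) • x) j / σ j| ≤ C⁻¹ * |x j| := by
          rw [Pi.smul_apply, smul_eq_mul, abs_div, abs_mul, abs_of_pos (div_pos hs hC₀),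
            abs_of_pos hσj, div_le_iff₀ hσj, div_eq_inv_mul, mul_assoc, mul_assoc, mul_comm s]
          gcongr
          exact hσ j
        calc |((s / C) • x) j / σ j| ^ p.toReal ≤ (C⁻¹ * |x j|) ^ p.toReal := by gcongr
          _ = C⁻¹ ^ p.toReal * |x j| ^ p.toReal := Real.mul_rpow (by positivity) (abs_nonneg _)
          _ ≤ C⁻¹ * |x j| ^ p.toReal := by
              gcongr
              exact Real.rpow_le_self_of_le_one (by positivity) (inv_le_one_of_one_le₀ hC) hP
    _ ≤ C⁻¹ * C := by
        rw [← Finset.mul_sum]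
        gcongr
    _ = 1 := inv_mul_cancel₀ hC₀.ne'

lemma div_three_le_minrad {m n : ℕ} {p : ℝ≥0∞} {σ : Fin m → ℝ} {s : ℝ} (hp₁ : 1 ≤ p)
    (hp₂ : p ≤ 2) (hs : 0 < s) (hσ : ∀ j, s ≤ σ j) (hm : m ≠ 0) (hnm : 2 * n ≤ m)
    (hn : (n : ℝ) ≤ (m : ℝ) ^ (2 * (1 - 1 / p.toReal))) : s / 3 ≤ minrad p σ n := by
  have hp₀ : p ≠ 0 := (zero_lt_one.trans_le hp₁).ne'
  have hp : p ≠ ∞ := ne_top_of_le_ne_top ENNReal.ofNat_ne_top hp₂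
  have hP : p.toReal ≤ 2 := by simpa using ENNReal.toReal_mono ENNReal.ofNat_ne_top hp₂
  have : NeZero m := ⟨hm⟩
  refine le_minrad hp₀ (fun j => hs.trans_le (hσ j)) (by omega) fun E hE => ?_
  obtain ⟨x, hxE, hx_rpow, hx_sq⟩ := exists_mem_sum_abs_rpow_le_two (ENNReal.toReal_pos hp₀ hp) hP E
    (by simpa [hE] using hnm) (by simpa [hE] using hn)
  refine ⟨(s / 2) • x, E.smul_mem _ hxE,
    smul_mem_ellipsoid_of_sum_rpow_le hp₁ hp hs hσ one_le_two hx_rpow, ?_⟩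
  simp only [Pi.smul_apply, smul_eq_mul, mul_pow, ← Finset.mul_sum]
  calc (s / 3) ^ 2 ≤ (s / 2) ^ 2 * (1 / 2) := by nlinarith [sq_nonneg s]
    _ ≤ (s / 2) ^ 2 * ∑ j, x j ^ 2 := by gcongr

/-! ### Weighted sums over ellipsoids -/

lemma exists_forall_sum_rpow_le {δ : ℝ} (hδ : 0 < δ) :
    ∃ C > 0, ∀ m : ℕ, ∑ j : Fin m, ((j : ℕ) + 1 : ℝ) ^ (-1 - δ) ≤ C := by
  have hsummable : Summable fun j : ℕ => ((j : ℝ) + 1) ^ (-1 - δ) := by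
    simpa using (summable_nat_add_iff 1).2 (Real.summable_nat_rpow.2 (by linarith : -1 - δ < -1))
  refine ⟨_, hsummable.tsum_pos (fun j => by positivity) 0 (by positivity), fun m => ?_⟩
  rw [Fin.sum_univ_eq_sum_range (fun j : ℕ => ((j : ℝ) + 1) ^ (-1 - δ)) m]
  exact hsummable.sum_le_tsum _ fun j _ => by positivity

lemma mul_rpow_le_rpow_add_rpow {r δ a y : ℝ} (hr : 1 ≤ r) (hδ : 0 ≤ δ) (ha : 0 ≤ a) (hy : 1 ≤ y) :
    a * y ^ (-(1 - 1 / r) - δ) ≤ a ^ r + y ^ (-1 - δ) := by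
  have hy₀ : 0 < y := zero_lt_one.trans_le hy
  rcases hr.eq_or_lt with rfl | hr₁
  · have hle : y ^ (-(1 - 1 / (1 : ℝ)) - δ) ≤ 1 :=
      Real.rpow_le_one_of_one_le_of_nonpos hy (by linarith)
    rw [Real.rpow_one]
    exact (mul_le_of_le_one_right ha hle).trans (le_add_of_nonneg_right (by positivity))
  · have hconj := Real.HolderConjugate.conjExponent hr₁
    set q := r.conjExponent
    have hexp : (-(1 - 1 / r) - δ) * q ≤ -1 - δ := by
      have h₁ : (1 - 1 / r) * q = 1 := by
        rw [one_div, hconj.one_sub_inv, inv_mul_cancel₀ hconj.symm.ne_zero]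
      nlinarith [hconj.symm.lt]
    calc a * y ^ (-(1 - 1 / r) - δ)
        ≤ a ^ r / r + (y ^ (-(1 - 1 / r) - δ)) ^ q / q :=
          Real.young_inequality_of_nonneg ha (by positivity) hconj
      _ ≤ a ^ r + (y ^ (-(1 - 1 / r) - δ)) ^ q :=
          add_le_add (div_le_self (by positivity) hr)
            (div_le_self (by positivity) hconj.symm.lt.le)
      _ ≤ a ^ r + y ^ (-1 - δ) := by
          rw [← Real.rpow_mul hy₀.le]
          gcongr

section WeightedSums

variable {p : ℝ≥0∞}

lemma exists_forall_sum_mul_rpow_le_of_mem_ellipsoid {q δ : ℝ} (hq : 0 < q)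
    (hqp : ENNReal.ofReal q ≤ p) (hδ : 0 < δ) :
    ∃ C > 0, ∀ (m : ℕ) (σ x : Fin m → ℝ), x ∈ ellipsoid p σ →
      ∑ j : Fin m, |x j / σ j| ^ q * ((j : ℕ) + 1 : ℝ) ^ (-(1 - q / p.toReal) - δ) ≤ C := by
  obtain ⟨C, hC₀, hC⟩ := exists_forall_sum_rpow_le hδ
  have hp₀ : p ≠ 0 := ((ENNReal.ofReal_pos.2 hq).trans_le hqp).ne'
  rcases eq_or_ne p ∞ with rfl | hp
  · refine ⟨C, hC₀, fun m σ x hx => (Finset.sum_le_sum fun j _ => ?_).trans (hC m)⟩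
    simpa using mul_le_of_le_one_left (by positivity)
      (Real.rpow_le_one (abs_nonneg _) (mem_ellipsoid_top.1 hx j) hq.le)
  · have hr : 1 ≤ p.toReal / q := (one_le_div hq).2 ((ENNReal.ofReal_le_iff_le_toReal hp).1 hqp)
    refine ⟨1 + C, by positivity, fun m σ x hx => ?_⟩
    have hterm (j : Fin m) :
        |x j / σ j| ^ q * ((j : ℕ) + 1 : ℝ) ^ (-(1 - q / p.toReal) - δ) ≤
          |x j / σ j| ^ p.toReal + ((j : ℕ) + 1 : ℝ) ^ (-1 - δ) := by
      have h := mul_rpow_le_rpow_add_rpow (a := |x j / σ j| ^ q) hr hδ.le (by positivity)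
        (le_add_of_nonneg_left (Nat.cast_nonneg (j : ℕ)))
      rwa [one_div_div, ← Real.rpow_mul (abs_nonneg _), mul_div_cancel₀ _ hq.ne'] at h
    calc _ ≤ ∑ j : Fin m, (|x j / σ j| ^ p.toReal + ((j : ℕ) + 1 : ℝ) ^ (-1 - δ)) :=
          Finset.sum_le_sum fun j _ => hterm j
      _ ≤ 1 + C := by
          rw [Finset.sum_add_distrib]
          exact add_le_add ((mem_ellipsoid_iff_sum_rpow_le_one hp₀ hp).1 hx) (hC m)

lemma exists_forall_sum_abs_rpow_le_of_mem_ellipsoid {q δ : ℝ} (hq : 0 < q)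
    (hqp : ENNReal.ofReal q ≤ p) (hδ : 0 < δ) :
    ∃ C > 0, ∀ {m : ℕ} {σ x : Fin m → ℝ} {S : Finset (Fin m)} {G : ℝ}, (∀ j, 0 < σ j) →
      x ∈ ellipsoid p σ → 0 ≤ G →
      (∀ j ∈ S, σ j ^ q * ((j : ℕ) + 1 : ℝ) ^ (1 - q / p.toReal + δ) ≤ G) →
      ∑ j ∈ S, |x j| ^ q ≤ G * C := by
  obtain ⟨C, hC₀, hC⟩ := exists_forall_sum_mul_rpow_le_of_mem_ellipsoid hq hqp hδ
  refine ⟨C, hC₀, fun {m σ x S G} hσ hx hG hS => ?_⟩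
  have hterm (j : Fin m) (hj : j ∈ S) : |x j| ^ q ≤
      G * (|x j / σ j| ^ q * ((j : ℕ) + 1 : ℝ) ^ (-(1 - q / p.toReal) - δ)) := by
    have hweight : ((j : ℕ) + 1 : ℝ) ^ (1 - q / p.toReal + δ) *
        ((j : ℕ) + 1 : ℝ) ^ (-(1 - q / p.toReal) - δ) = 1 := by
      rw [← Real.rpow_add (by positivity), ← neg_add', add_neg_cancel, Real.rpow_zero]
    calc |x j| ^ q = σ j ^ q * |x j / σ j| ^ q := by
          rw [← Real.mul_rpow (hσ j).le (abs_nonneg _), abs_div, abs_of_pos (hσ j),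
            mul_div_cancel₀ _ (hσ j).ne']
      _ = σ j ^ q * ((j : ℕ) + 1 : ℝ) ^ (1 - q / p.toReal + δ) *
          (|x j / σ j| ^ q * ((j : ℕ) + 1 : ℝ) ^ (-(1 - q / p.toReal) - δ)) := by
          rw [mul_mul_mul_comm, hweight, mul_one]
      _ ≤ _ := by
          gcongr
          exact hS j hj
  calc ∑ j ∈ S, |x j| ^ q
      ≤ G * ∑ j ∈ S, |x j / σ j| ^ q * ((j : ℕ) + 1 : ℝ) ^ (-(1 - q / p.toReal) - δ) := by
        rw [Finset.mul_sum]
        exact Finset.sum_le_sum hterm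
    _ ≤ G * C := by
        gcongr
        exact (Finset.sum_le_univ_sum_of_nonneg fun j => by positivity).trans (hC m σ x hx)

variable {m : ℕ} {σ x : Fin m → ℝ}

lemma sum_sq_le_of_mem_ellipsoid {T : Finset (Fin m)} {s : ℝ} (hp₀ : p ≠ 0) (hp₂ : p ≤ 2)
    (hσ : ∀ j, 0 < σ j) (hx : x ∈ ellipsoid p σ) (hT : ∀ j ∈ T, σ j ≤ s) :
    ∑ j ∈ T, x j ^ 2 ≤ s ^ 2 := by
  have hp : p ≠ ∞ := ne_top_of_le_ne_top ENNReal.ofNat_ne_top hp₂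
  have hP : p.toReal ≤ 2 := by simpa using ENNReal.toReal_mono ENNReal.ofNat_ne_top hp₂
  have hterm (j : Fin m) (hj : j ∈ T) : x j ^ 2 ≤ s ^ 2 * |x j / σ j| ^ p.toReal := by
    have hpow : |x j / σ j| ^ 2 ≤ |x j / σ j| ^ p.toReal := by
      rw [← Real.rpow_two]
      exact Real.rpow_le_rpow_of_exponent_ge' (abs_nonneg _)
        (abs_div_le_one_of_mem_ellipsoid hp₀ hx j) ENNReal.toReal_nonneg hP
    calc x j ^ 2 = σ j ^ 2 * |x j / σ j| ^ 2 := by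
          rw [sq_abs, ← mul_pow, mul_div_cancel₀ _ (hσ j).ne']
      _ ≤ s ^ 2 * |x j / σ j| ^ p.toReal := by
          gcongr
          exacts [(hσ j).le, hT j hj]
  calc ∑ j ∈ T, x j ^ 2 ≤ s ^ 2 * ∑ j ∈ T, |x j / σ j| ^ p.toReal := by
        rw [Finset.mul_sum]
        exact Finset.sum_le_sum hterm
    _ ≤ s ^ 2 * 1 := by
        gcongr
        exact (Finset.sum_le_univ_sum_of_nonneg fun j => by positivity).trans
          ((mem_ellipsoid_iff_sum_rpow_le_one hp₀ hp).1 hx)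
    _ = s ^ 2 := mul_one _

lemma minrad_le_sqrt_of_vanishing {n : ℕ} {B : ℝ} (H : Finset (Fin m)) (hH : H.card ≤ n)
    (hn : n ≤ m) (hB : ∀ x ∈ ellipsoid p σ, ∑ j ∈ Hᶜ, x j ^ 2 ≤ B) : minrad p σ n ≤ √B := by
  refine minrad_le_sqrt (vanishingOn H) ((finrank_quotient_vanishingOn_le H).trans hH) hn
    fun x hx hxH => ?_
  have hsum : ∑ j ∈ H, x j ^ 2 = 0 :=
    Finset.sum_eq_zero fun j hj => by rw [mem_vanishingOn.1 hxH j hj, zero_pow two_ne_zero]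
  rw [← Finset.sum_add_sum_compl H, hsum, zero_add]
  exact hB x hx

lemma minrad_le_sqrt_of_block {n l k : ℕ} {G s : ℝ} (hp₀ : p ≠ 0) (hp₂ : p ≤ 2)
    (hσ : ∀ j, 0 < σ j) (H S : Finset (Fin m)) (hl : l ≠ 0) (hk : 0 < k)
    (hHl : H.card + l ≤ n) (hn : n ≤ m) (hS : (2 * (S.card : ℝ)) ^ k * (10 / 11) ^ l < 1)
    (hG : ∀ x ∈ ellipsoid p σ, ∑ j ∈ S, |x j| ≤ G) (hs : ∀ j ∉ H ∪ S, σ j ≤ s) :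
    minrad p σ n ≤ √(16 * G ^ 2 / k + s ^ 2) := by
  obtain ⟨E, hE, hEx⟩ := exists_submodule_vanishing_sum_sq_le H S hl hS
  refine minrad_le_sqrt E (hE.trans hHl) hn fun x hx hxE => ?_
  obtain ⟨hxH, hxS⟩ := hEx x hxE
  have hblock : ∑ j ∈ S, x j ^ 2 ≤ 16 * G ^ 2 / k := by
    rw [le_div_iff₀' (Nat.cast_pos.2 hk)]
    refine hxS.trans ?_
    gcongr
    exact hG x hx
  have hvanish : ∑ j ∈ H ∪ S, x j ^ 2 = ∑ j ∈ S, x j ^ 2 := by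
    refine (Finset.sum_subset Finset.subset_union_right fun j hj hjS => ?_).symm
    rw [hxH j ((Finset.mem_union.1 hj).resolve_right hjS), zero_pow two_ne_zero]
  rw [← Finset.sum_add_sum_compl (H ∪ S), hvanish]
  exact add_le_add hblock (sum_sq_le_of_mem_ellipsoid hp₀ hp₂ hσ hx fun j hj =>
    hs j (Finset.mem_compl.1 hj))

end WeightedSums

/-! ### Polynomial decay -/

section Decay

/-- The polynomial decay of a double sequence of radii: `r m n = O(n ^ (-ρ))` for `1 ≤ n < m`,
uniformly in the ambient dimension `m`. -/
def DecaysAtRate (r : ℕ → ℕ → ℝ) (ρ : ℝ) : Prop :=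
  ∃ C : ℝ, 0 < C ∧ ∀ m n : ℕ, 1 ≤ n → n < m → r m n ≤ C * (n : ℝ) ^ (-ρ)

variable {r : ℕ → ℕ → ℝ} {ρ : ℝ}

lemma DecaysAtRate.le_of_exists_le {c T : ℝ} (h : DecaysAtRate r ρ) (hc : 0 < c)
    (hr : ∀ n : ℕ, 1 ≤ n → ∃ m > n, c * (n : ℝ) ^ (-T) ≤ r m n) : ρ ≤ T := by
  obtain ⟨C, -, hC⟩ := h
  by_contra! hlt
  have hlim : Filter.Tendsto (fun n : ℕ => (n : ℝ) ^ (ρ - T)) Filter.atTop Filter.atTop :=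
    (tendsto_rpow_atTop (sub_pos.2 hlt)).comp tendsto_natCast_atTop_atTop
  obtain ⟨n, hn, hn₁⟩ :=
    ((hlim.eventually_gt_atTop (C / c)).and (Filter.eventually_ge_atTop 1)).exists
  obtain ⟨m, hm, hle⟩ := hr n hn₁
  have hn₀ : (0 : ℝ) < n := Nat.cast_pos.2 hn₁
  have hcancel : (n : ℝ) ^ (-T) = (n : ℝ) ^ (ρ - T) * (n : ℝ) ^ (-ρ) := by
    rw [← Real.rpow_add hn₀]
    ring_nf
  have := hle.trans (hC m n hn₁ hm)
  rw [hcancel, ← mul_assoc] at this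
  exact ((div_lt_iff₀' hc).1 hn).not_ge (le_of_mul_le_mul_right this (by positivity))

lemma DecaysAtRate.of_eventually {B C : ℝ} (hρ : 0 ≤ ρ)
    (hB : ∀ m n : ℕ, n < m → r m n ≤ B)
    (hC : ∀ᶠ n : ℕ in Filter.atTop, ∀ m > n, r m n ≤ C * (n : ℝ) ^ (-ρ)) : DecaysAtRate r ρ := by
  obtain ⟨n₀, hn₀⟩ := Filter.eventually_atTop.1 hC
  have hpos : 0 < |C| + |B| * (n₀ : ℝ) ^ ρ + 1 := by positivity
  refine ⟨|C| + |B| * (n₀ : ℝ) ^ ρ + 1, hpos, fun m n hn hnm => ?_⟩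
  have hn' : (0 : ℝ) < n := Nat.cast_pos.2 hn
  rcases le_total n₀ n with hle | hle
  · refine (hn₀ n hle m hnm).trans (mul_le_mul_of_nonneg_right ?_ (by positivity))
    have : 0 ≤ |B| * (n₀ : ℝ) ^ ρ := by positivity
    linarith [le_abs_self C]
  · calc r m n ≤ |B| * (n : ℝ) ^ ρ * (n : ℝ) ^ (-ρ) := by
          rw [mul_assoc, ← Real.rpow_add hn', add_neg_cancel, Real.rpow_zero, mul_one]
          exact (hB m n hnm).trans (le_abs_self B)
      _ ≤ (|C| + |B| * (n₀ : ℝ) ^ ρ + 1) * (n : ℝ) ^ (-ρ) := by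
          gcongr
          have : |B| * (n : ℝ) ^ ρ ≤ |B| * (n₀ : ℝ) ^ ρ := by gcongr
          linarith [abs_nonneg C]

lemma sSup_setOf_decaysAtRate_eq {T : ℝ} (hT : 0 < T) (hle : ∀ ρ, DecaysAtRate r ρ → ρ ≤ T)
    (hlt : ∀ ρ, 0 ≤ ρ → ρ < T → DecaysAtRate r ρ) : sSup {ρ | 0 ≤ ρ ∧ DecaysAtRate r ρ} = T := by
  have hlub : IsLUB {ρ | 0 ≤ ρ ∧ DecaysAtRate r ρ} T :=
    IsLUB.of_subset_of_superset (isLUB_Ico hT) (isLUB_Icc hT.le)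
      (fun ρ hρ => ⟨hρ.1, hlt ρ hρ.1 hρ.2⟩) fun ρ hρ => ⟨hρ.1, hle ρ hρ.2⟩
  exact hlub.csSup_eq ⟨0, le_rfl, hlt 0 le_rfl hT⟩

end Decay

section PowerSemiaxes

variable {m n : ℕ} {p : ℝ≥0∞} {lam : ℝ}

/-- The semiaxes `σ_j = j ^ (-λ)`, `1 ≤ j ≤ m`, with the index shifted to start at `0`. -/
noncomputable def powerSemiaxes (lam : ℝ) (m : ℕ) : Fin m → ℝ :=
  fun j => ((j : ℕ) + 1 : ℝ) ^ (-lam)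

lemma powerSemiaxes_pos (lam : ℝ) (j : Fin m) : 0 < powerSemiaxes lam m j := by
  unfold powerSemiaxes
  positivity

lemma powerSemiaxes_le {y : ℝ} {j : Fin m} (hlam : 0 ≤ lam) (hy : 0 < y) (hj : y ≤ (j : ℕ) + 1) :
    powerSemiaxes lam m j ≤ y ^ (-lam) :=
  Real.rpow_le_rpow_of_nonpos hy hj (neg_nonpos.2 hlam)

lemma rpow_le_powerSemiaxes (hlam : 0 ≤ lam) (j : Fin m) :
    (m : ℝ) ^ (-lam) ≤ powerSemiaxes lam m j :=
  Real.rpow_le_rpow_of_nonpos (by positivity) (by exact_mod_cast j.2) (neg_nonpos.2 hlam)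

lemma powerSemiaxes_rpow_mul_rpow (q s : ℝ) (j : Fin m) :
    powerSemiaxes lam m j ^ q * ((j : ℕ) + 1 : ℝ) ^ s = ((j : ℕ) + 1 : ℝ) ^ (s - q * lam) := by
  rw [powerSemiaxes, ← Real.rpow_mul (by positivity), ← Real.rpow_add (by positivity)]
  ring_nf

lemma card_filter_val_lt_le (m n : ℕ) : ({j | (j : ℕ) < n} : Finset (Fin m)).card ≤ n := by
  convert Fin.card_filter_val_lt.trans_le (min_le_right m n)

lemma rate_le_of_decaysAtRate (hp₀ : p ≠ 0) (hlam : 0 ≤ lam) {ρ : ℝ}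
    (h : DecaysAtRate (fun m => minrad p (powerSemiaxes lam m)) ρ) :
    ρ ≤ lam + 1 / p.toReal - 1 / 2 := by
  refine h.le_of_exists_le (c := 2 ^ (-lam) * 2 ^ (-(1 / p.toReal))) (by positivity)
    fun n hn => ⟨2 * n, by omega, ?_⟩
  have hn₀ : (0 : ℝ) < n := Nat.cast_pos.2 hn
  have hsplit : (n : ℝ) ^ (-(lam + 1 / p.toReal - 1 / 2)) =
      (n : ℝ) ^ (-lam) * (n : ℝ) ^ (-(1 / p.toReal)) * √n := by
    rw [Real.sqrt_eq_rpow, ← Real.rpow_add hn₀, ← Real.rpow_add hn₀]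
    ring_nf
  calc 2 ^ (-lam) * 2 ^ (-(1 / p.toReal)) * (n : ℝ) ^ (-(lam + 1 / p.toReal - 1 / 2))
      = ((2 * n : ℕ) : ℝ) ^ (-lam) * ((2 * n : ℕ) : ℝ) ^ (-(1 / p.toReal)) *
          √((2 * n : ℕ) - n) := by
        push_cast
        rw [hsplit, two_mul (n : ℝ), add_sub_cancel_right, ← two_mul,
          Real.mul_rpow two_pos.le hn₀.le, Real.mul_rpow two_pos.le hn₀.le]
        ring
    _ ≤ minrad p (powerSemiaxes lam (2 * n)) n :=
        mul_rpow_mul_sqrt_le_minrad hp₀ (by positivity) (rpow_le_powerSemiaxes hlam) (by omega)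

lemma rate_le_mul_inv_div_two_of_decaysAtRate (hp₁ : 1 ≤ p) (hp₂ : p ≤ 2) (hlam : 0 ≤ lam)
    (hβ : 0 < 1 - 1 / p.toReal) {ρ : ℝ}
    (h : DecaysAtRate (fun m => minrad p (powerSemiaxes lam m)) ρ) :
    ρ ≤ lam * (1 - 1 / p.toReal)⁻¹ / 2 := by
  set β := 1 - 1 / p.toReal
  have hβ_half : β ≤ 1 / 2 := by
    have hp : p.toReal ≤ 2 := by simpa using ENNReal.toReal_mono ENNReal.ofNat_ne_top hp₂
    have hp_pos : 0 < p.toReal := ENNReal.toReal_pos (zero_lt_one.trans_le hp₁).ne'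
      (ne_top_of_le_ne_top ENNReal.ofNat_ne_top hp₂)
    linarith [one_div_le_one_div_of_le hp_pos hp]
  set K := β⁻¹ / 2 with hK
  have hKβ : K * (2 * β) = 1 := by rw [hK]; field_simp
  have hK₁ : 1 ≤ K := by nlinarith
  rw [mul_div_assoc, ← hK]
  refine h.le_of_exists_le (c := 4 ^ (-lam) / 3) (by positivity) fun n hn => ?_
  have hn₁ : (1 : ℝ) ≤ n := Nat.one_le_cast.2 hn
  have hnK : (n : ℝ) ≤ (n : ℝ) ^ K := Real.self_le_rpow_of_one_le hn₁ hK₁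
  -- The smallest dimension, up to constants, with `n ≤ m ^ (2 * β)`.
  set m := ⌈2 * (n : ℝ) ^ K⌉₊
  have hm_ge : 2 * (n : ℝ) ^ K ≤ m := Nat.le_ceil _
  have hm_le : (m : ℝ) ≤ 4 * (n : ℝ) ^ K := by
    linarith [Nat.ceil_le_two_mul (by linarith : (2 : ℝ)⁻¹ ≤ 2 * (n : ℝ) ^ K)]
  have hnm : 2 * n ≤ m := by
    have : (2 * n : ℝ) ≤ m := by linarith
    exact_mod_cast this
  have hn_le : (n : ℝ) ≤ (m : ℝ) ^ (2 * β) := by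
    calc (n : ℝ) = ((n : ℝ) ^ K) ^ (2 * β) := by
          rw [← Real.rpow_mul (by positivity), hKβ, Real.rpow_one]
      _ ≤ (m : ℝ) ^ (2 * β) := by
          gcongr
          linarith
  refine ⟨m, by omega, ?_⟩
  calc 4 ^ (-lam) / 3 * (n : ℝ) ^ (-(lam * K)) = (4 * (n : ℝ) ^ K) ^ (-lam) / 3 := by
        rw [Real.mul_rpow (by norm_num) (by positivity), ← Real.rpow_mul (by positivity)]
        ring_nf
    _ ≤ (m : ℝ) ^ (-lam) / 3 := by
        gcongr ?_ / 3
        exact Real.rpow_le_rpow_of_nonpos (by positivity) hm_le (neg_nonpos.2 hlam)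
    _ ≤ minrad p (powerSemiaxes lam m) n :=
        div_three_le_minrad hp₁ hp₂ (by positivity) (rpow_le_powerSemiaxes hlam) (by omega) hnm
          hn_le

lemma decaysAtRate_of_two_le (hp : 2 ≤ p) {ρ : ℝ} (hρ₀ : 0 ≤ ρ)
    (hρ : ρ < lam + 1 / p.toReal - 1 / 2) :
    DecaysAtRate (fun m => minrad p (powerSemiaxes lam m)) ρ := by
  obtain ⟨C, hC₀, hC⟩ := exists_forall_sum_abs_rpow_le_of_mem_ellipsoid two_pos
    (by simpa using hp) (by linarith : 0 < 2 * (lam + 1 / p.toReal - 1 / 2 - ρ))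
  refine ⟨√C, Real.sqrt_pos.2 hC₀, fun m n hn hnm => ?_⟩
  have hn₀ : (0 : ℝ) < n := Nat.cast_pos.2 hn
  set H : Finset (Fin m) := {j | (j : ℕ) < n} with hH
  have hweight (j : Fin m) (hj : j ∈ Hᶜ) : powerSemiaxes lam m j ^ (2 : ℝ) * ((j : ℕ) + 1 : ℝ) ^
      (1 - 2 / p.toReal + 2 * (lam + 1 / p.toReal - 1 / 2 - ρ)) ≤ (n : ℝ) ^ (-(2 * ρ)) := by
    have hnj : (n : ℝ) ≤ (j : ℕ) + 1 := by
      have : n ≤ (j : ℕ) := by simpa [hH] using hj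
      exact_mod_cast this.trans (Nat.le_succ _)
    rw [powerSemiaxes_rpow_mul_rpow]
    convert Real.rpow_le_rpow_of_nonpos hn₀ hnj (by linarith : -(2 * ρ) ≤ 0) using 2
    ring
  have hbound : minrad p (powerSemiaxes lam m) n ≤ √((n : ℝ) ^ (-(2 * ρ)) * C) := by
    refine minrad_le_sqrt_of_vanishing H (card_filter_val_lt_le m n) hnm.le fun x hx => ?_
    simpa using hC (powerSemiaxes_pos lam) hx (by positivity) hweight
  refine hbound.trans_eq ?_
  rw [mul_comm, Real.sqrt_mul hC₀.le, Real.sqrt_eq_rpow ((n : ℝ) ^ _), ← Real.rpow_mul hn₀.le]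
  ring_nf

lemma eventually_pow_mul_pow_lt_one {K d : ℝ} (hK : 0 ≤ K) (hd : 0 < d) (hd₁ : d ≤ 1) :
    ∀ᶠ n : ℕ in Filter.atTop,
      (2 * (⌈(n : ℝ) ^ K⌉₊ : ℝ)) ^ ⌈(n : ℝ) ^ (1 - d)⌉₊ * (10 / 11) ^ (n - n / 2) < 1 := by
  set c := Real.log (11 / 10) with hc
  have hc₀ : 0 < c := Real.log_pos (by norm_num)
  have hlog : (fun x : ℝ => Real.log 4 + K * Real.log x) =o[Filter.atTop] fun x => x ^ d :=
    (Asymptotics.isLittleO_const_left.2 <| .inr <|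
      tendsto_norm_atTop_atTop.comp (tendsto_rpow_atTop hd)).add
      ((isLittleO_log_rpow_atTop hd).const_mul_left K)
  filter_upwards [tendsto_natCast_atTop_atTop.eventually (hlog.bound (by positivity : 0 < c / 8)),
    Filter.eventually_ge_atTop 1] with n hlog_le hn
  have hn₀ : (0 : ℝ) < n := Nat.cast_pos.2 hn
  have hceil {s : ℝ} (hs : 0 ≤ s) : (⌈(n : ℝ) ^ s⌉₊ : ℝ) ≤ 2 * (n : ℝ) ^ s :=
    Nat.ceil_le_two_mul (by linarith [Real.one_le_rpow (Nat.one_le_cast.2 hn) hs])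
  rw [Real.norm_eq_abs, Real.norm_of_nonneg (by positivity)] at hlog_le
  set k := ⌈(n : ℝ) ^ (1 - d)⌉₊
  have hbase : (2 * (⌈(n : ℝ) ^ K⌉₊ : ℝ)) ^ k ≤ Real.exp (k * (Real.log 4 + K * Real.log n)) := by
    rw [Real.exp_nat_mul, Real.exp_add, Real.exp_log (by norm_num), mul_comm K,
      ← Real.rpow_def_of_pos hn₀]
    gcongr ?_ ^ k
    linarith [hceil hK]
  have hdecay : (10 / 11 : ℝ) ^ (n - n / 2) = Real.exp (-((n - n / 2 : ℕ) * c)) := by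
    rw [Real.exp_neg, Real.exp_nat_mul, hc, Real.exp_log (by norm_num), ← inv_pow, inv_div]
  have hexp : k * (Real.log 4 + K * Real.log n) ≤ c / 4 * n := by
    calc k * (Real.log 4 + K * Real.log n) ≤ 2 * (n : ℝ) ^ (1 - d) * (c / 8 * (n : ℝ) ^ d) :=
          mul_le_mul (hceil (sub_nonneg.2 hd₁)) ((le_abs_self _).trans hlog_le)
            (by positivity) (by positivity)
      _ = c / 4 * ((n : ℝ) ^ (1 - d) * (n : ℝ) ^ d) := by ring
      _ = c / 4 * n := by rw [← Real.rpow_add hn₀, sub_add_cancel, Real.rpow_one]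
  have hhalf : (n : ℝ) ≤ 2 * (n - n / 2 : ℕ) := by exact_mod_cast (by omega : n ≤ 2 * (n - n / 2))
  calc _ ≤ Real.exp (k * (Real.log 4 + K * Real.log n)) * (10 / 11) ^ (n - n / 2) := by gcongr
    _ < 1 := by
        rw [hdecay, ← Real.exp_add, Real.exp_lt_one_iff]
        nlinarith

lemma minrad_powerSemiaxes_le_one (hp₀ : p ≠ 0) (hp₂ : p ≤ 2) (hlam : 0 ≤ lam) (hn : n ≤ m) :
    minrad p (powerSemiaxes lam m) n ≤ 1 := by
  have hone (j : Fin m) : powerSemiaxes lam m j ≤ 1 := by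
    simpa using powerSemiaxes_le (j := j) hlam one_pos (by simp)
  rw [← Real.sqrt_one, ← one_pow (M := ℝ) 2]
  exact minrad_le_sqrt_of_vanishing ∅ (by simp) hn fun x hx =>
    sum_sq_le_of_mem_ellipsoid hp₀ hp₂ (powerSemiaxes_pos lam) hx fun j _ => hone j

lemma minrad_powerSemiaxes_le_sqrt {k M : ℕ} {G : ℝ} (hp₀ : p ≠ 0) (hp₂ : p ≤ 2) (hlam : 0 ≤ lam)
    (hk : 0 < k) (hM : 0 < M) (hn : 1 ≤ n) (hnm : n ≤ m)
    (hsmall : (2 * (M : ℝ)) ^ k * (10 / 11) ^ (n - n / 2) < 1)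
    (hG : ∀ x ∈ ellipsoid p (powerSemiaxes lam m),
      ∑ j : Fin m with n / 2 ≤ j.val ∧ j.val < M, |x j| ≤ G) :
    minrad p (powerSemiaxes lam m) n ≤ √(16 * G ^ 2 / k + ((M : ℝ) ^ (-lam)) ^ 2) := by
  have hcard : (Finset.card {j : Fin m | n / 2 ≤ j.val ∧ j.val < M} : ℝ) ≤ M :=
    Nat.cast_le.2 <| (Finset.card_le_card
      (Finset.monotone_filter_right _ fun _ _ h => h.2)).trans (card_filter_val_lt_le m M)
  refine minrad_le_sqrt_of_block hp₀ hp₂ (powerSemiaxes_pos lam) {j | (j : ℕ) < n / 2} _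
    (by omega : n - n / 2 ≠ 0) hk ?_ hnm (hsmall.trans_le' ?_) hG fun j hj => ?_
  · have := card_filter_val_lt_le m (n / 2)
    omega
  · gcongr
  · refine powerSemiaxes_le hlam (Nat.cast_pos.2 hM) ?_
    simp only [Finset.mem_union, Finset.mem_filter, Finset.mem_univ, true_and] at hj
    exact_mod_cast (by omega : M ≤ (j : ℕ) + 1)

lemma sqrt_sq_div_add_sq_le {A d k ρ s y : ℝ} (hy : 0 < y) (hk : y ^ (1 - d) ≤ k) (hs₀ : 0 ≤ s)
    (hs : s ≤ y ^ (-ρ)) :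
    √(16 * (A * y ^ ((1 - d) / 2 - ρ)) ^ 2 / k + s ^ 2) ≤ √(16 * A ^ 2 + 1) * y ^ (-ρ) := by
  have hk₀ : 0 < k := (Real.rpow_pos_of_pos hy _).trans_le hk
  have hsq : (y ^ ((1 - d) / 2 - ρ)) ^ 2 = y ^ (1 - d) * (y ^ (-ρ)) ^ 2 := by
    simp only [← Real.rpow_natCast, ← Real.rpow_mul hy.le, ← Real.rpow_add hy]
    push_cast
    ring_nf
  refine (Real.sqrt_le_left (by positivity)).2 ?_
  rw [mul_pow √_, Real.sq_sqrt (by positivity), add_mul, one_mul]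
  gcongr
  rw [div_le_iff₀ hk₀, mul_pow, hsq]
  calc 16 * (A ^ 2 * (y ^ (1 - d) * (y ^ (-ρ)) ^ 2))
      ≤ 16 * (A ^ 2 * (k * (y ^ (-ρ)) ^ 2)) := by gcongr
    _ = 16 * A ^ 2 * (y ^ (-ρ)) ^ 2 * k := by ring

lemma minrad_powerSemiaxes_le_mul_rpow {A K d ρ : ℝ} (hp₀ : p ≠ 0) (hp₂ : p ≤ 2) (hlam : 0 ≤ lam)
    (hn : 1 ≤ n) (hnm : n ≤ m) (hρ : ρ ≤ K * lam)
    (hsmall : (2 * (⌈(n : ℝ) ^ K⌉₊ : ℝ)) ^ ⌈(n : ℝ) ^ (1 - d)⌉₊ * (10 / 11) ^ (n - n / 2) < 1)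
    (hA : ∀ x ∈ ellipsoid p (powerSemiaxes lam m),
      ∑ j : Fin m with n / 2 ≤ j.val ∧ j.val < ⌈(n : ℝ) ^ K⌉₊, |x j| ≤
        A * (n : ℝ) ^ ((1 - d) / 2 - ρ)) :
    minrad p (powerSemiaxes lam m) n ≤ √(16 * A ^ 2 + 1) * (n : ℝ) ^ (-ρ) := by
  have hn₀ : (0 : ℝ) < n := Nat.cast_pos.2 hn
  refine (minrad_powerSemiaxes_le_sqrt hp₀ hp₂ hlam (Nat.ceil_pos.2 (by positivity))
    (Nat.ceil_pos.2 (by positivity)) hn hnm hsmall hA).trans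
    (sqrt_sq_div_add_sq_le hn₀ (Nat.le_ceil _) (by positivity) ?_)
  calc (⌈(n : ℝ) ^ K⌉₊ : ℝ) ^ (-lam) ≤ ((n : ℝ) ^ K) ^ (-lam) :=
        Real.rpow_le_rpow_of_nonpos (by positivity) (Nat.le_ceil _) (neg_nonpos.2 hlam)
    _ = (n : ℝ) ^ (-(K * lam)) := by rw [← Real.rpow_mul hn₀.le, mul_neg]
    _ ≤ (n : ℝ) ^ (-ρ) :=
        Real.rpow_le_rpow_of_exponent_le (Nat.one_le_cast.2 hn) (neg_le_neg hρ)

lemma rpow_add_le_mul_rpow_add {D K a b δ y z : ℝ} (hy : 0 < y) (hz : 0 < z) (hδ : 0 ≤ δ)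
    (hyz : y ≤ 2 * z ^ K) (hD : y ^ a ≤ D * z ^ b) :
    y ^ (a + δ) ≤ D * 2 ^ δ * z ^ (b + K * δ) := by
  calc y ^ (a + δ) ≤ D * z ^ b * (2 * z ^ K) ^ δ := by
        rw [Real.rpow_add hy]
        exact mul_le_mul hD (Real.rpow_le_rpow hy.le hyz hδ) (by positivity)
          ((by positivity : 0 ≤ y ^ a).trans hD)
    _ = D * 2 ^ δ * z ^ (b + K * δ) := by
        rw [Real.mul_rpow two_pos.le (by positivity), ← Real.rpow_mul hz.le, Real.rpow_add hz]
        ring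

lemma exists_forall_block_sum_abs_le {D K b ε : ℝ} (hp : 1 ≤ p) (hK : 0 < K) (hε : 0 < ε)
    (hD : ∀ n : ℕ, 1 ≤ n → ∀ y ∈ Set.Icc ((n : ℝ) / 2) (2 * (n : ℝ) ^ K),
      y ^ (1 - 1 / p.toReal - lam) ≤ D * (n : ℝ) ^ b) :
    ∃ A, ∀ n : ℕ, 1 ≤ n → ∀ m, ∀ x ∈ ellipsoid p (powerSemiaxes lam m),
      ∑ j : Fin m with n / 2 ≤ j.val ∧ j.val < ⌈(n : ℝ) ^ K⌉₊, |x j| ≤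
        A * (n : ℝ) ^ (b + ε) := by
  have hD₁ : 1 ≤ D := by simpa using hD 1 le_rfl 1 (by norm_num)
  obtain ⟨δ, hδ₀, rfl⟩ : ∃ δ > 0, K * δ = ε := ⟨ε / K, by positivity, by field_simp⟩
  obtain ⟨C, -, hC⟩ :=
    exists_forall_sum_abs_rpow_le_of_mem_ellipsoid one_pos (by simpa using hp) hδ₀
  refine ⟨D * 2 ^ δ * C, fun n hn m x hx => ?_⟩
  have hM_le : (⌈(n : ℝ) ^ K⌉₊ : ℝ) ≤ 2 * (n : ℝ) ^ K :=
    Nat.ceil_le_two_mul (by linarith [Real.one_le_rpow (Nat.one_le_cast.2 hn) hK.le])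
  rw [mul_right_comm]
  refine (Finset.sum_congr rfl fun j _ => (Real.rpow_one _).symm).trans_le
    (hC (powerSemiaxes_pos lam) hx (by positivity) fun j hj => ?_)
  obtain ⟨hj_ge, hj_lt⟩ := (Finset.mem_filter.1 hj).2
  have hy_ge : (n : ℝ) / 2 ≤ j.val + 1 := by
    rw [div_le_iff₀ two_pos]
    exact_mod_cast (by omega : n ≤ (j.val + 1) * 2)
  have hy_le : (j.val + 1 : ℝ) ≤ 2 * (n : ℝ) ^ K := hM_le.trans' (by exact_mod_cast hj_lt)
  rw [powerSemiaxes_rpow_mul_rpow, one_mul, add_sub_right_comm]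
  exact rpow_add_le_mul_rpow_add (by positivity) (by positivity) hδ₀.le hy_le
    (hD n hn _ ⟨hy_ge, hy_le⟩)

-- `hD` makes the `ℓ_1`-sums over the block `n / 2 ≤ j ≤ n ^ K` at most about
-- `n ^ (1 / 2 - K * λ)`; a random subspace gains the factor `n ^ (-1 / 2)` there, and beyond the
-- block the semiaxes are at most `n ^ (-K * λ)`.
lemma decaysAtRate_of_forall_rpow_le {D K ρ : ℝ} (hp₁ : 1 ≤ p) (hp₂ : p ≤ 2) (hlam : 0 < lam)
    (hK : 0 < K)
    (hD : ∀ n : ℕ, 1 ≤ n → ∀ y ∈ Set.Icc ((n : ℝ) / 2) (2 * (n : ℝ) ^ K),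
      y ^ (1 - 1 / p.toReal - lam) ≤ D * (n : ℝ) ^ (1 / 2 - K * lam))
    (hρ₀ : 0 ≤ ρ) (hρ : ρ < K * lam) :
    DecaysAtRate (fun m => minrad p (powerSemiaxes lam m)) ρ := by
  have hp₀ : p ≠ 0 := (zero_lt_one.trans_le hp₁).ne'
  obtain ⟨d, hd₀, hd₁, hdρ⟩ : ∃ d, 0 < d ∧ d ≤ 1 ∧ d ≤ K * lam - ρ :=
    ⟨min 1 (K * lam - ρ), lt_min one_pos (sub_pos.2 hρ), min_le_left _ _, min_le_right _ _⟩
  obtain ⟨A, hA⟩ := exists_forall_block_sum_abs_le hp₁ hK (half_pos hd₀) hD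
  refine .of_eventually (B := 1) (C := √(16 * |A| ^ 2 + 1)) hρ₀
    (fun m n hnm => minrad_powerSemiaxes_le_one hp₀ hp₂ hlam.le hnm.le) ?_
  filter_upwards [eventually_pow_mul_pow_lt_one hK.le hd₀ hd₁, Filter.eventually_ge_atTop 1]
    with n hsmall hn m hnm
  refine minrad_powerSemiaxes_le_mul_rpow hp₀ hp₂ hlam.le hn hnm.le hρ.le hsmall fun x hx => ?_
  calc ∑ j : Fin m with n / 2 ≤ j.val ∧ j.val < ⌈(n : ℝ) ^ K⌉₊, |x j|
      ≤ A * (n : ℝ) ^ (1 / 2 - K * lam + d / 2) := hA n hn m x hx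
    _ ≤ |A| * (n : ℝ) ^ ((1 - d) / 2 - ρ) := by
        gcongr
        · exact le_abs_self A
        · exact Nat.one_le_cast.2 hn
        · linarith

lemma decaysAtRate_of_lt_one_sub (hp₁ : 1 ≤ p) (hp₂ : p ≤ 2) (hlam : 0 < lam)
    (hβ : lam < 1 - 1 / p.toReal) {ρ : ℝ} (hρ₀ : 0 ≤ ρ)
    (hρ : ρ < lam * (1 - 1 / p.toReal)⁻¹ / 2) :
    DecaysAtRate (fun m => minrad p (powerSemiaxes lam m)) ρ := by
  set β := 1 - 1 / p.toReal
  have hβ₀ : 0 < β := hlam.trans hβ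
  refine decaysAtRate_of_forall_rpow_le (K := β⁻¹ / 2) (D := 2 ^ (β - lam)) hp₁ hp₂ hlam
    (by positivity) (fun n hn y hy => ?_) hρ₀ (by linarith)
  calc y ^ (β - lam) ≤ (2 * (n : ℝ) ^ (β⁻¹ / 2)) ^ (β - lam) :=
        Real.rpow_le_rpow ((by positivity : (0 : ℝ) ≤ n / 2).trans hy.1) hy.2 (sub_pos.2 hβ).le
    _ = 2 ^ (β - lam) * (n : ℝ) ^ (1 / 2 - β⁻¹ / 2 * lam) := by
        rw [Real.mul_rpow two_pos.le (by positivity), ← Real.rpow_mul (by positivity)]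
        congr 2
        field_simp

lemma decaysAtRate_of_one_sub_le (hp₁ : 1 ≤ p) (hp₂ : p ≤ 2) (hlam : 0 < lam)
    (hβ : 1 - 1 / p.toReal ≤ lam) {ρ : ℝ} (hρ₀ : 0 ≤ ρ) (hρ : ρ < lam + 1 / p.toReal - 1 / 2) :
    DecaysAtRate (fun m => minrad p (powerSemiaxes lam m)) ρ := by
  have hK : (lam + 1 / p.toReal - 1 / 2) / lam * lam = lam + 1 / p.toReal - 1 / 2 :=
    div_mul_cancel₀ _ hlam.ne'
  refine decaysAtRate_of_forall_rpow_le (K := (lam + 1 / p.toReal - 1 / 2) / lam)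
    (D := 2⁻¹ ^ (1 - 1 / p.toReal - lam)) hp₁ hp₂ hlam (div_pos (hρ₀.trans_lt hρ) hlam)
    (fun n hn y hy => ?_) hρ₀ (by rwa [hK])
  have hn₀ : (0 : ℝ) < n := Nat.cast_pos.2 hn
  calc y ^ (1 - 1 / p.toReal - lam) ≤ ((n : ℝ) / 2) ^ (1 - 1 / p.toReal - lam) :=
        Real.rpow_le_rpow_of_nonpos (by positivity) hy.1 (by linarith)
    _ = 2⁻¹ ^ (1 - 1 / p.toReal - lam) *
          (n : ℝ) ^ (1 / 2 - (lam + 1 / p.toReal - 1 / 2) / lam * lam) := by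
        rw [div_eq_inv_mul, Real.mul_rpow (by norm_num) hn₀.le, hK]
        ring_nf

end PowerSemiaxes

/-- For `1 ≤ p ≤ ∞`, `σ_j = j^{-λ}` (0-indexed) with
`λ > (1/2 - 1/p)₊`, the polynomial decay rate of the minimal radius equals `λ p*/2` if
`1 ≤ p < 2` and `λ < 1/p* = 1 - 1/p`, and `λ + 1/p - 1/2` otherwise. -/
theorem statement16 (p : ℝ≥0∞) (hp : 1 ≤ p) (lam : ℝ)
    (hlam : max (1 / 2 - 1 / p.toReal) 0 < lam) :
    sSup {ρ : ℝ | 0 ≤ ρ ∧ ∃ C : ℝ, 0 < C ∧ ∀ (m n : ℕ), 1 ≤ n → n < m →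
        minrad p (fun j : Fin m => ((j : ℕ) + 1 : ℝ) ^ (-lam)) n ≤ C * (n : ℝ) ^ (-ρ)} =
      if p < 2 ∧ lam < 1 - 1 / p.toReal then lam * pstar p / 2
      else lam + 1 / p.toReal - 1 / 2 := by
  obtain ⟨hlam_gt, hlam₀⟩ := max_lt_iff.1 hlam
  have hp₀ : p ≠ 0 := (zero_lt_one.trans_le hp).ne'
  change sSup {ρ | 0 ≤ ρ ∧ DecaysAtRate (fun m => minrad p (powerSemiaxes lam m)) ρ} = _
  split_ifs with h
  · obtain ⟨hp₂, hβ⟩ := h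
    have hβ₀ : 0 < 1 - 1 / p.toReal := hlam₀.trans hβ
    exact sSup_setOf_decaysAtRate_eq (half_pos (mul_pos hlam₀ (inv_pos.2 hβ₀)))
      (fun ρ => rate_le_mul_inv_div_two_of_decaysAtRate hp hp₂.le hlam₀.le hβ₀)
      (fun ρ => decaysAtRate_of_lt_one_sub hp hp₂.le hlam₀ hβ)
  · refine sSup_setOf_decaysAtRate_eq (by linarith)
      (fun ρ => rate_le_of_decaysAtRate hp₀ hlam₀.le) fun ρ hρ₀ hρ => ?_
    rcases lt_or_ge p 2 with hp₂ | hp₂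
    · exact decaysAtRate_of_one_sub_le hp hp₂.le hlam₀
        (not_lt.1 fun hβ => h ⟨hp₂, hβ⟩) hρ₀ hρ
    · exact decaysAtRate_of_two_le hp₂ hρ₀ hρ
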